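/- Fix μ₁, μ₂ ∈ ℂ and let Ψ(z₀,z₁) = (z₀³, μ₁z₀²z₁, μ₂z₀z₁², −(μ₁μ₂/3)z₁³). Then: (a) for every (z₀,z₁) ∈ ℂ²∖{0}, τ(Ψ(z₀,z₁)) equals D(z₀,z₁)⁻¹·( |z₀|⁶ − |μ₁|²|z₀|⁴|z₁|² − |μ₂|²|z₀|²|z₁|⁴ + (|μ₁|²|μ₂|²/9)|z₁|⁶ , 2μ₁ z̄₀z₁(|z₀|⁴ − (|μ₂|²/3)|z₁|⁴) , 2μ₂ z̄₀²z₁²(|z₀|² + (|μ₁|²/3)|z₁|²) ), where D(z₀,z₁) = |z₀|⁶ + |μ₁|²|z₀|⁴|z₁|² + |μ₂|²|z₀|²|z₁|⁴ + (|μ₁|²|μ₂|²/9)|z₁|⁶; (b) the resulting map ω_{μ₁,μ₂}: S² → S⁴ (obtained via the identification [z₀,z₁] ↦ σ₂⁻¹(z₁/z₀)) is smooth, S¹-equivariant, is a harmonic sphere, and satisfies ω_{μ₁,μ₂}(0,0,1) = (1,0,0); (c) ω_{μ₁,μ₂} is linearly full if and only if μ₁ ≠ 0 and μ₂ ≠ 0;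 and (d) if μ₁μ₂ ≠ 0 then ∫_{B₁} |∇ŵ|² dx = 24π, where ŵ(x) = ω_{μ₁,μ₂}(x/|x|) and B₁ ⊂ ℝ³ is the unit ball. -/

import Mathlib

noncomputable section

open MeasureTheory
open scoped Classical

abbrev E3 : Type := EuclideanSpace ℝ (Fin 3)

abbrev V5 : Type := ℝ × ℂ × ℂ

/-- Squared Euclidean norm on ℝ ⊕ ℂ ⊕ ℂ. -/
def nsq (p : V5) : ℝ := p.1 ^ 2 + Complex.normSq p.2.1 + Complex.normSq p.2.2

/-- Real inner product on ℝ ⊕ ℂ ⊕ ℂ. -/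
def vdot (p q : V5) : ℝ :=
  p.1 * q.1 + (p.2.1 * (starRingEnd ℂ) q.2.1).re + (p.2.2 * (starRingEnd ℂ) q.2.2).re

/-- The circle action R_α · (t, ζ₁, ζ₂) = (t, e^{iα}ζ₁, e^{2iα}ζ₂) on ℝ ⊕ ℂ ⊕ ℂ. -/
def circAct (α : ℝ) (p : V5) : V5 :=
  (p.1, Complex.exp (Complex.I * (α : ℂ)) * p.2.1,
    Complex.exp (2 * Complex.I * (α : ℂ)) * p.2.2)

/-- Rotation of ℝ³ by angle α about the x₃-axis. -/
def rot3 (α : ℝ) (x : E3) : E3 :=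
  EuclideanSpace.single (0 : Fin 3) (Real.cos α * x 0 - Real.sin α * x 1) +
    EuclideanSpace.single (1 : Fin 3) (Real.sin α * x 0 + Real.cos α * x 1) +
    EuclideanSpace.single (2 : Fin 3) (x 2)

/-- The unit sphere S² ⊂ ℝ³. -/
def sphere2 : Set E3 := Metric.sphere (0 : E3) 1

def northPole : E3 := EuclideanSpace.single (2 : Fin 3) (1 : ℝ)

def southPole : E3 := EuclideanSpace.single (2 : Fin 3) (-1 : ℝ)

/-- Degree-zero homogeneous extension of a map defined on the sphere. -/
def homExt (ω : E3 → V5) : E3 → V5 := fun x => ω (‖x‖⁻¹ • x)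

def homExtR (g : E3 → ℝ) : E3 → ℝ := fun x => g (‖x‖⁻¹ • x)

/-- Squared Euclidean norm of the differential. -/
def gradSq (f : E3 → V5) (x : E3) : ℝ :=
  ∑ i : Fin 3, nsq (fderiv ℝ f x (EuclideanSpace.single i (1 : ℝ)))

def gradSqR (f : E3 → ℝ) (x : E3) : ℝ :=
  ∑ i : Fin 3, fderiv ℝ f x (EuclideanSpace.single i (1 : ℝ)) ^ 2

/-- Componentwise Euclidean Laplacian. -/
def lap (f : E3 → V5) (x : E3) : V5 :=
  ∑ i : Fin 3,
    fderiv ℝ (fun y => fderiv ℝ f y (EuclideanSpace.single i (1 : ℝ))) x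
      (EuclideanSpace.single i (1 : ℝ))

/-- ω : S² → S⁴ is a (smooth) harmonic sphere: it maps the sphere into the unit
sphere of ℝ ⊕ ℂ ⊕ ℂ, its degree-zero homogeneous extension Q is smooth away from
the origin, and ΔQ + |∇Q|²Q = 0 on ℝ³ ∖ {0}. -/
def IsHarmonicSphere (ω : E3 → V5) : Prop :=
  (∀ x ∈ sphere2, nsq (ω x) = 1) ∧
    ContDiffOn ℝ (⊤ : ℕ∞) (homExt ω) {(0 : E3)}ᶜ ∧
    ∀ x : E3, x ≠ 0 → lap (homExt ω) x + gradSq (homExt ω) x • homExt ω x = 0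

/-- S¹-equivariance of a sphere map. -/
def EquivariantS (ω : E3 → V5) : Prop :=
  ∀ α : ℝ, ∀ x ∈ sphere2, ω (rot3 α x) = circAct α (ω x)

/-- S¹-equivariance of a vector field on ℝ³. -/
def EquivariantV (X : E3 → V5) : Prop :=
  ∀ (α : ℝ) (x : E3), X (rot3 α x) = circAct α (X x)

/-- Tangential part X_T = X - (w·X)w. -/
def tangPart (w X : E3 → V5) : E3 → V5 := fun x => X x - vdot (w x) (X x) • w x

/-- Second variation δ²E₀(w)[X] = ∫ (|∇X_T|² - |∇w|²|X_T|²). -/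
def secondVar (w X : E3 → V5) : ℝ :=
  ∫ x : E3, (gradSq (tangPart w X) x - gradSq w x * nsq (tangPart w X x))

/-- Stability of a tangent map within the S¹-equivariant class. -/
def IsStable (w : E3 → V5) : Prop :=
  ∀ X : E3 → V5, ContDiff ℝ (⊤ : ℕ∞) X → HasCompactSupport X → EquivariantV X →
    0 ≤ secondVar w X

def conj' (z : ℂ) : ℂ := (starRingEnd ℂ) z

/-- The twistor fibration, in homogeneous coordinates on ℂ⁴ ∖ {0}. -/
def tau4 (w0 w1 w2 w3 : ℂ) : V5 :=
  ((Complex.normSq w0 + Complex.normSq w3 - Complex.normSq w1 - Complex.normSq w2) /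
      (Complex.normSq w0 + Complex.normSq w1 + Complex.normSq w2 + Complex.normSq w3),
    2 * (conj' w0 * w1 + conj' w2 * w3) /
      ((Complex.normSq w0 + Complex.normSq w1 + Complex.normSq w2 + Complex.normSq w3 : ℝ) : ℂ),
    2 * (conj' w0 * w2 - conj' w1 * w3) /
      ((Complex.normSq w0 + Complex.normSq w1 + Complex.normSq w2 + Complex.normSq w3 : ℝ) : ℂ))

/-- Inverse stereographic projection ℂ → S² (from the south pole). -/
def stInv (z : ℂ) : E3 :=
  EuclideanSpace.single (0 : Fin 3) (2 * z.re / (1 + Complex.normSq z)) +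
    EuclideanSpace.single (1 : Fin 3) (2 * z.im / (1 + Complex.normSq z)) +
    EuclideanSpace.single (2 : Fin 3) ((1 - Complex.normSq z) / (1 + Complex.normSq z))

/-- Equatorial embedding ω_eq^{(1)}(x) = (x₃, x₁ + ix₂, 0). -/
def omegaEq1 (x : E3) : V5 := (x 2, (x 0 : ℂ) + (x 1 : ℂ) * Complex.I, 0)

/-- Equatorial embedding ω_eq^{(2)}(x) = (x₃, 0, x₁ + ix₂). -/
def omegaEq2 (x : E3) : V5 := (x 2, 0, (x 0 : ℂ) + (x 1 : ℂ) * Complex.I)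

/-- The horizontal algebraic curve composed with the twistor fibration. -/
def liftCurve (μ1 μ2 z0 z1 : ℂ) : V5 :=
  tau4 (z0 ^ 3) (μ1 * z0 ^ 2 * z1) (μ2 * z0 * z1 ^ 2) (-(μ1 * μ2 / 3) * z1 ^ 3)

/-- The explicit two-parameter family ω_{μ₁,μ₂} of equivariant harmonic spheres,
as a map defined on S² via the identification [z₀, z₁] ↦ σ₂⁻¹(z₁/z₀). -/
def omegaFam (μ1 μ2 : ℂ) (x : E3) : V5 :=
  if x = southPole then
    if μ1 = 0 ∧ μ2 = 0 then ((1 : ℝ), 0, 0)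
    else if μ1 ≠ 0 ∧ μ2 ≠ 0 then liftCurve μ1 μ2 0 1
    else ((-1 : ℝ), 0, 0)
  else liftCurve μ1 μ2 ((1 + x 2 : ℝ) : ℂ) ((x 0 : ℂ) + (x 1 : ℂ) * Complex.I)

/-- Wirtinger derivative ∂f/∂z̄ = ½(∂_{x₁} + i ∂_{x₂})f. -/
def wd (f : ℂ → ℂ) (z : ℂ) : ℂ :=
  (1 / 2 : ℂ) * (fderiv ℝ f z 1 + Complex.I * fderiv ℝ f z Complex.I)

/-- Surface (2-dimensional Hausdorff) measure on ℝ³. -/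
def surf : Measure E3 := Measure.hausdorffMeasure 2

/-- The denominator D(z₀,z₁) in the explicit formula for ω_{μ₁,μ₂}. -/
def Dfun (μ1 μ2 z0 z1 : ℂ) : ℝ :=
  Complex.normSq z0 ^ 3 + Complex.normSq μ1 * Complex.normSq z0 ^ 2 * Complex.normSq z1 +
    Complex.normSq μ2 * Complex.normSq z0 * Complex.normSq z1 ^ 2 +
    Complex.normSq μ1 * Complex.normSq μ2 / 9 * Complex.normSq z1 ^ 3

/-- The explicit formula for ω_{μ₁,μ₂}([z₀,z₁]). -/
def explicitFam (μ1 μ2 z0 z1 : ℂ) : V5 :=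
  ((Complex.normSq z0 ^ 3 - Complex.normSq μ1 * Complex.normSq z0 ^ 2 * Complex.normSq z1 -
        Complex.normSq μ2 * Complex.normSq z0 * Complex.normSq z1 ^ 2 +
        Complex.normSq μ1 * Complex.normSq μ2 / 9 * Complex.normSq z1 ^ 3) /
      Dfun μ1 μ2 z0 z1,
    2 * μ1 * conj' z0 * z1 *
        ((Complex.normSq z0 ^ 2 - Complex.normSq μ2 / 3 * Complex.normSq z1 ^ 2 : ℝ) : ℂ) /
      ((Dfun μ1 μ2 z0 z1 : ℝ) : ℂ),
    2 * μ2 * conj' z0 ^ 2 * z1 ^ 2 *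
        ((Complex.normSq z0 + Complex.normSq μ1 / 3 * Complex.normSq z1 : ℝ) : ℂ) /
      ((Dfun μ1 μ2 z0 z1 : ℝ) : ℂ))

/-!
The curve `Ψ` is horizontal for the twistor fibration `τ : ℂP³ → S⁴`. The components of `τ` are
Rayleigh quotients `⟪w, A w⟫ / ⟪w, w⟫`, and horizontality of a holomorphic curve `F` forces
`Δ (τ ∘ F) = -8 g (τ ∘ F)`, where `g` is the Fubini–Study density of `F`. The stereographic
projection from `-e`, extended to `ℝ³` with homogeneity zero, is harmonic and horizontally conformal
with factor `(‖x‖ + ⟪e, x⟫)⁻²` off the ray through `-e`, so composing with it turns `τ ∘ F` into a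
solution of the harmonic map equation. The exceptional ray is covered by the chart at the opposite
pole, where the curve has to be divided by a common factor of its coordinates.

The span of the image is invariant under the circle, which acts on `ℝ ⊕ ℂ ⊕ ℂ` with three different
weights, so fullness only requires one point with nonzero components in both copies of `ℂ`.

In the coordinates `p = ‖x‖ + x₃` and `ζ = (x₁ + i x₂) / p`, Lebesgue measure is
`p² (1 + |ζ|²) / 2 dp dζ` and the unit ball is `p (1 + |ζ|²) < 2`. Integrating out `p` shows that
the energy is eight times the Fubini–Study area of the curve, which has degree three and area `3π`.
-/

section LaplacianCalculus

open Laplacian InnerProductSpace Topology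

variable {ι E F G H : Type*} [Fintype ι]
  [NormedAddCommGroup E] [NormedAddCommGroup F] [NormedSpace ℝ F]
  [NormedAddCommGroup G] [NormedSpace ℝ G] [NormedAddCommGroup H] [NormedSpace ℝ H]

theorem fderiv_fderiv_apply_eq [NormedSpace ℝ E] {f : E → F} {x : E}
    (hf : ContDiffAt ℝ 2 f x) (v w : E) :
    fderiv ℝ (fun y => fderiv ℝ f y v) x w = fderiv ℝ (fderiv ℝ f) x w v := by
  have hf' : DifferentiableAt ℝ (fderiv ℝ f) x :=
    (hf.fderiv_right (m := 1) le_rfl).differentiableAt one_ne_zero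
  simp [fderiv_clm_apply hf' (differentiableAt_const v)]

theorem eventually_differentiableAt_of_contDiffAt [NormedSpace ℝ E] {f : E → F} {x : E}
    (hf : ContDiffAt ℝ 2 f x) :
    ∀ᶠ y in 𝓝 x, DifferentiableAt ℝ f y :=
  (hf.eventually (by simp)).mono fun _ hy => hy.differentiableAt two_ne_zero

variable [InnerProductSpace ℝ E] [FiniteDimensional ℝ E]

theorem laplacian_eq_sum_fderiv_fderiv (b : OrthonormalBasis ι ℝ E) (f : E → F) (x : E) :
    Δ f x = ∑ i, fderiv ℝ (fderiv ℝ f) x (b i) (b i) := by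
  simp [laplacian_eq_iteratedFDeriv_orthonormalBasis f b, iteratedFDeriv_two_apply]

theorem laplacian_bilinear (b : OrthonormalBasis ι ℝ E) (B : F →L[ℝ] G →L[ℝ] H)
    {f : E → F} {g : E → G} {x : E} (hf : ContDiffAt ℝ 2 f x) (hg : ContDiffAt ℝ 2 g x) :
    Δ (fun y => B (f y) (g y)) x = B (Δ f x) (g x)
      + (2 : ℝ) • ∑ i, B (fderiv ℝ f x (b i)) (fderiv ℝ g x (b i)) + B (f x) (Δ g x) := by
  have hf' := (hf.fderiv_right (m := 1) le_rfl).differentiableAt one_ne_zero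
  have hg' := (hg.fderiv_right (m := 1) le_rfl).differentiableAt one_ne_zero
  have hBfg : ContDiffAt ℝ 2 (fun y => B (f y) (g y)) x :=
    B.isBoundedBilinearMap.contDiff.contDiffAt.comp x (hf.prodMk hg)
  have first (v : E) : (fun y => fderiv ℝ (fun z => B (f z) (g z)) y v) =ᶠ[𝓝 x]
      fun y => B (f y) (fderiv ℝ g y v) + B (fderiv ℝ f y v) (g y) := by
    filter_upwards [eventually_differentiableAt_of_contDiffAt hf,
      eventually_differentiableAt_of_contDiffAt hg] with y hfy hgy
    simp [B.fderiv_of_bilinear hfy hgy]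
  have second (v : E) : fderiv ℝ (fderiv ℝ fun z => B (f z) (g z)) x v v =
      B (fderiv ℝ (fderiv ℝ f) x v v) (g x)
        + (2 : ℝ) • B (fderiv ℝ f x v) (fderiv ℝ g x v)
        + B (f x) (fderiv ℝ (fderiv ℝ g) x v v) := by
    have hfv : DifferentiableAt ℝ (fun y => fderiv ℝ f y v) x := hf'.clm_apply (by fun_prop)
    have hgv : DifferentiableAt ℝ (fun y => fderiv ℝ g y v) x := hg'.clm_apply (by fun_prop)
    have hfx := hf.differentiableAt two_ne_zero
    have hgx := hg.differentiableAt two_ne_zero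
    have hfgv : DifferentiableAt ℝ (fun y => B (f y) (fderiv ℝ g y v)) x :=
      (B.isBoundedBilinearMap.differentiableAt _).comp x (hfx.prodMk hgv)
    have hfvg : DifferentiableAt ℝ (fun y => B (fderiv ℝ f y v) (g y)) x :=
      (B.isBoundedBilinearMap.differentiableAt _).comp x (hfv.prodMk hgx)
    rw [← fderiv_fderiv_apply_eq hBfg, (first v).fderiv_eq,
      fderiv_fun_add hfgv hfvg, B.fderiv_of_bilinear hfx hgv, B.fderiv_of_bilinear hfv hgx]
    simp only [ContinuousLinearMap.precompR_apply, ContinuousLinearMap.compL_apply, add_apply,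
      ContinuousLinearMap.comp_apply, fderiv_fderiv_apply_eq hg,
      ContinuousLinearMap.precompL_apply, fderiv_fderiv_apply_eq hf, two_smul]
    abel
  simp [laplacian_eq_sum_fderiv_fderiv b, second, Finset.sum_add_distrib, Finset.smul_sum]

theorem laplacian_comp (b : OrthonormalBasis ι ℝ E) {φ : E → F} {u : F → G} {x : E}
    (hu : ContDiffAt ℝ 2 u (φ x)) (hφ : ContDiffAt ℝ 2 φ x) :
    Δ (u ∘ φ) x =
      ∑ i, fderiv ℝ (fderiv ℝ u) (φ x) (fderiv ℝ φ x (b i)) (fderiv ℝ φ x (b i))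
        + fderiv ℝ u (φ x) (Δ φ x) := by
  have hu' : DifferentiableAt ℝ (fderiv ℝ u) (φ x) :=
    (hu.fderiv_right (m := 1) le_rfl).differentiableAt one_ne_zero
  have hφ' : DifferentiableAt ℝ (fderiv ℝ φ) x :=
    (hφ.fderiv_right (m := 1) le_rfl).differentiableAt one_ne_zero
  have hφx := hφ.differentiableAt two_ne_zero
  have first (v : E) : (fun y => fderiv ℝ (u ∘ φ) y v) =ᶠ[𝓝 x]
      fun y => fderiv ℝ u (φ y) (fderiv ℝ φ y v) := by
    filter_upwards [eventually_differentiableAt_of_contDiffAt hφ,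
      hφ.continuousAt.eventually (eventually_differentiableAt_of_contDiffAt hu)] with y hφy huy
    simp [fderiv_comp y huy hφy]
  have second (v : E) : fderiv ℝ (fderiv ℝ (u ∘ φ)) x v v =
      fderiv ℝ (fderiv ℝ u) (φ x) (fderiv ℝ φ x v) (fderiv ℝ φ x v)
        + fderiv ℝ u (φ x) (fderiv ℝ (fderiv ℝ φ) x v v) := by
    have hφv : DifferentiableAt ℝ (fun y => fderiv ℝ φ y v) x := hφ'.clm_apply (by fun_prop)
    rw [← fderiv_fderiv_apply_eq (hu.comp x hφ), (first v).fderiv_eq,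
      fderiv_clm_apply (c := fun y => fderiv ℝ u (φ y)) (hu'.comp x hφx) hφv,
      fderiv_fun_comp x hu' hφx]
    simp [fderiv_fderiv_apply_eq hφ, add_comm]
  simp [laplacian_eq_sum_fderiv_fderiv b, second, Finset.sum_add_distrib]

/-- The hypothesis `∑ aᵢ² = 0` is the pointwise form of horizontal conformality. -/
theorem sum_apply_apply_of_sum_sq_eq_zero (B : ℂ →L[ℝ] ℂ →L[ℝ] F) (hB : ∀ z w, B z w = B w z)
    {a : ι → ℂ} (ha : ∑ i, a i ^ 2 = 0) :
    ∑ i, B (a i) (a i) = ((∑ i, ‖a i‖ ^ 2) / 2) • (B 1 1 + B Complex.I Complex.I) := by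
  have expand (z : ℂ) : B z z = (z.re ^ 2) • B 1 1 + (2 * (z.re * z.im)) • B 1 Complex.I
      + (z.im ^ 2) • B Complex.I Complex.I := by
    have hz : z = z.re • (1 : ℂ) + z.im • Complex.I := by simp
    conv_lhs => rw [hz]
    simp only [map_add, map_smul, add_apply, smul_apply, hB Complex.I 1]
    module
  have hre : ∑ i, (a i).re ^ 2 = ∑ i, (a i).im ^ 2 := by
    have := congrArg Complex.re ha
    simp only [Complex.re_sum, pow_two, Complex.mul_re, Finset.sum_sub_distrib,
      Complex.zero_re] at this
    simpa only [pow_two] using sub_eq_zero.mp this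
  have him : ∑ i, 2 * ((a i).re * (a i).im) = 0 := by
    have := congrArg Complex.im ha
    simp only [Complex.im_sum, pow_two, Complex.mul_im, Complex.zero_im] at this
    rw [← this]
    exact Finset.sum_congr rfl fun i _ => by ring
  have hnorm : ∑ i, ‖a i‖ ^ 2 = 2 * ∑ i, (a i).im ^ 2 := by
    have : ∑ i, ‖a i‖ ^ 2 = ∑ i, (a i).re ^ 2 + ∑ i, (a i).im ^ 2 := by
      simp only [Complex.sq_norm, Complex.normSq_apply, ← pow_two, Finset.sum_add_distrib]
    rw [this, hre, two_mul]
  simp only [Finset.sum_congr rfl fun i _ => expand (a i), Finset.sum_add_distrib,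
    ← Finset.sum_smul, hre, him, hnorm]
  module

theorem laplacian_comp_of_conformal (b : OrthonormalBasis ι ℝ E) {φ : E → ℂ} {u : ℂ → F} {x : E}
    (hu : ContDiffAt ℝ 2 u (φ x)) (hφ : ContDiffAt ℝ 2 φ x) (hφ_harmonic : Δ φ x = 0)
    (hφ_conformal : ∑ i, fderiv ℝ φ x (b i) ^ 2 = 0) :
    Δ (u ∘ φ) x = ((∑ i, ‖fderiv ℝ φ x (b i)‖ ^ 2) / 2) • Δ u (φ x) := by
  have symm : IsSymmSndFDerivAt ℝ u (φ x) := hu.isSymmSndFDerivAt (by simp)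
  rw [laplacian_comp b hu hφ, hφ_harmonic, map_zero, add_zero,
    sum_apply_apply_of_sum_sq_eq_zero _ (fun z w => symm.eq z w) hφ_conformal,
    laplacian_eq_sum_fderiv_fderiv Complex.orthonormalBasisOneI u]
  simp

end LaplacianCalculus

section Quotients

open Laplacian InnerProductSpace

variable {ι E 𝕜 : Type*} [Fintype ι] [NormedAddCommGroup E] [InnerProductSpace ℝ E]
  [NormedField 𝕜] [NormedAlgebra ℝ 𝕜]

/-- The carré du champ `Γ(f, g) = ∑ᵢ ∂ᵢf ∂ᵢg` with respect to an orthonormal basis. It is bilinear,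
not sesquilinear, when `𝕜 = ℂ`. -/
def carreDuChamp (b : OrthonormalBasis ι ℝ E) (f g : E → 𝕜) (x : E) : 𝕜 :=
  ∑ i, fderiv ℝ f x (b i) * fderiv ℝ g x (b i)

theorem laplacian_mul [FiniteDimensional ℝ E] (b : OrthonormalBasis ι ℝ E) {f g : E → 𝕜} {x : E}
    (hf : ContDiffAt ℝ 2 f x) (hg : ContDiffAt ℝ 2 g x) :
    Δ (fun y => f y * g y) x = Δ f x * g x + 2 * carreDuChamp b f g x + f x * Δ g x := by
  simpa [carreDuChamp, two_smul, two_mul] using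
    laplacian_bilinear b (ContinuousLinearMap.mul ℝ 𝕜) hf hg

theorem carreDuChamp_mul_left (b : OrthonormalBasis ι ℝ E) {f g : E → 𝕜} (h : E → 𝕜) {x : E}
    (hf : DifferentiableAt ℝ f x) (hg : DifferentiableAt ℝ g x) :
    carreDuChamp b (fun y => f y * g y) h x =
      f x * carreDuChamp b g h x + g x * carreDuChamp b f h x := by
  simp only [carreDuChamp, fderiv_fun_mul hf hg, add_apply, smul_apply, smul_eq_mul,
    Finset.mul_sum, ← Finset.sum_add_distrib]
  exact Finset.sum_congr rfl fun i _ => by ring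

theorem carreDuChamp_comm (b : OrthonormalBasis ι ℝ E) (f g : E → 𝕜) (x : E) :
    carreDuChamp b f g x = carreDuChamp b g f x := by
  simp only [carreDuChamp, mul_comm]

theorem div_mul_cancel_eventuallyEq {X K : Type*} [TopologicalSpace X] [NormedField K]
    {n d : X → K} {x : X} (hd : ContinuousAt d x) (hx : d x ≠ 0) :
    (fun y => n y / d y * d y) =ᶠ[nhds x] n := by
  filter_upwards [hd.eventually_ne hx] with y hy
  exact div_mul_cancel₀ _ hy

theorem carreDuChamp_div_left (b : OrthonormalBasis ι ℝ E) {n d : E → 𝕜} (h : E → 𝕜) {x : E}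
    (hn : DifferentiableAt ℝ n x) (hd : DifferentiableAt ℝ d x) (hx : d x ≠ 0) :
    carreDuChamp b (fun y => n y / d y) h x =
      (d x * carreDuChamp b n h x - n x * carreDuChamp b d h x) / d x ^ 2 := by
  have hnd : DifferentiableAt ℝ (fun y => n y / d y) x := by
    simpa only [div_eq_mul_inv] using hn.fun_mul (hd.fun_inv hx)
  have key := carreDuChamp_mul_left b h hnd hd
  rw [carreDuChamp, (div_mul_cancel_eventuallyEq hd.continuousAt hx).fderiv_eq,
    ← carreDuChamp] at key
  rw [key]
  field_simp
  ring

theorem laplacian_div [FiniteDimensional ℝ E] (b : OrthonormalBasis ι ℝ E) {n d : E → 𝕜} {x : E}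
    (hn : ContDiffAt ℝ 2 n x) (hd : ContDiffAt ℝ 2 d x) (hx : d x ≠ 0) :
    Δ (fun y => n y / d y) x = (d x ^ 2 * Δ n x - 2 * d x * carreDuChamp b n d x
      - n x * d x * Δ d x + 2 * n x * carreDuChamp b d d x) / d x ^ 3 := by
  have hnd : ContDiffAt ℝ 2 (fun y => n y / d y) x := by
    simpa only [div_eq_mul_inv] using hn.mul (hd.fun_inv hx)
  have key := laplacian_mul b hnd hd
  rw [(laplacian_congr_nhds (div_mul_cancel_eventuallyEq hd.continuousAt hx)).eq_of_nhds,
    carreDuChamp_div_left b d (hn.differentiableAt two_ne_zero)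
      (hd.differentiableAt two_ne_zero) hx] at key
  rw [key]
  field_simp
  ring

end Quotients

section Rayleigh

open Laplacian InnerProductSpace ComplexConjugate

variable {H : Type*} [NormedAddCommGroup H] [InnerProductSpace ℂ H]

local notation "⟪" x "," y "⟫" => inner ℂ x y

theorem fderiv_real_apply_of_differentiableAt {F : ℂ → H} {z : ℂ} (hF : DifferentiableAt ℂ F z)
    (c : ℂ) : fderiv ℝ F z c = c • deriv F z := by
  rw [hF.fderiv_restrictScalars ℝ]
  simp [fderiv_eq_smul_deriv]

theorem fderiv_inner_of_holomorphic {F G : ℂ → H} {z : ℂ} (hF : DifferentiableAt ℂ F z)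
    (hG : DifferentiableAt ℂ G z) (c : ℂ) :
    fderiv ℝ (fun ζ => ⟪F ζ, G ζ⟫) z c = c * ⟪F z, deriv G z⟫ + conj c * ⟪deriv F z, G z⟫ := by
  rw [fderiv_inner_apply ℂ (hF.restrictScalars ℝ) (hG.restrictScalars ℝ),
    fderiv_real_apply_of_differentiableAt hF, fderiv_real_apply_of_differentiableAt hG,
    inner_smul_left, inner_smul_right]

theorem carreDuChamp_inner_of_holomorphic {F G P Q : ℂ → H} {z : ℂ}
    (hF : DifferentiableAt ℂ F z) (hG : DifferentiableAt ℂ G z)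
    (hP : DifferentiableAt ℂ P z) (hQ : DifferentiableAt ℂ Q z) :
    carreDuChamp Complex.orthonormalBasisOneI (fun ζ => ⟪F ζ, G ζ⟫) (fun ζ => ⟪P ζ, Q ζ⟫) z =
      2 * (⟪F z, deriv G z⟫ * ⟪deriv P z, Q z⟫ + ⟪deriv F z, G z⟫ * ⟪P z, deriv Q z⟫) := by
  simp only [carreDuChamp, fderiv_inner_of_holomorphic hF hG, fderiv_inner_of_holomorphic hP hQ,
    Fin.sum_univ_two, Complex.coe_orthonormalBasisOneI, Matrix.cons_val_zero, Matrix.cons_val_one,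
    map_one, Complex.conj_I]
  linear_combination (⟪F z, deriv G z⟫ - ⟪deriv F z, G z⟫) *
    (⟪P z, deriv Q z⟫ - ⟪deriv P z, Q z⟫) * Complex.I_sq

theorem laplacian_inner_of_holomorphic {F G : ℂ → H} {z : ℂ}
    (hF : ContDiffAt ℂ 2 F z) (hG : ContDiffAt ℂ 2 G z) :
    Δ (fun ζ => ⟪F ζ, G ζ⟫) z = 4 * ⟪deriv F z, deriv G z⟫ := by
  have bilin := isBoundedBilinearMap_inner (𝕜 := ℂ) (E := H)
  have key := laplacian_bilinear Complex.orthonormalBasisOneI bilin.toContinuousLinearMap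
    hF.harmonicAt.1 hG.harmonicAt.1
  simp only [IsBoundedBilinearMap.toContinuousLinearMap_apply] at key
  rw [hF.harmonicAt.2.eq_of_nhds, hG.harmonicAt.2.eq_of_nhds] at key
  simp only [fderiv_real_apply_of_differentiableAt (hF.differentiableAt two_ne_zero),
    fderiv_real_apply_of_differentiableAt (hG.differentiableAt two_ne_zero),
    Fin.sum_univ_two] at key
  rw [key]
  simp only [Complex.coe_orthonormalBasisOneI, Matrix.cons_val_zero, Matrix.cons_val_one,
    inner_smul_left, inner_smul_right, map_one, Complex.conj_I, Pi.zero_apply, inner_zero_left,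
    inner_zero_right, Complex.real_smul, Complex.ofReal_ofNat]
  linear_combination -2 * ⟪deriv F z, deriv G z⟫ * Complex.I_sq

/-- The Rayleigh quotient `⟪w, A w⟫ / ⟪w, w⟫` of an operator which need not be self-adjoint, as a
complex number. -/
def complexRayleigh (A : H →L[ℂ] H) (w : H) : ℂ := ⟪w, A w⟫ / ⟪w, w⟫

/-- The Fubini–Study squared length of the tangent vector represented by `v` at the line spanned by
`w`, normalised so that `‖v‖² / ‖w‖²` is its value for `v` orthogonal to `w`. -/
def fubiniStudy (w v : H) : ℝ := (‖w‖ ^ 2 * ‖v‖ ^ 2 - ‖⟪w, v⟫‖ ^ 2) / ‖w‖ ^ 4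

theorem ofReal_fubiniStudy (w v : H) :
    (fubiniStudy w v : ℂ) = (⟪w, w⟫ * ⟪v, v⟫ - ⟪w, v⟫ * ⟪v, w⟫) / ⟪w, w⟫ ^ 2 := by
  have hwv : ⟪w, v⟫ * ⟪v, w⟫ = ((‖⟪w, v⟫‖ ^ 2 : ℝ) : ℂ) := by
    rw [← inner_conj_symm v w, Complex.mul_conj, Complex.normSq_eq_norm_sq]
  have hself (u : H) : ⟪u, u⟫ = ((‖u‖ ^ 2 : ℝ) : ℂ) := by simp
  rw [hwv, hself, hself, fubiniStudy]
  push_cast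
  ring

/-- The two-point identity characterising the operators whose Rayleigh quotients are harmonic along
holomorphic curves through `w` with velocity `v`, up to the conformal factor. -/
def PolarizesAt (A : H →L[ℂ] H) (w v : H) : Prop :=
  ⟪w, w⟫ * ⟪v, A v⟫ + ⟪v, v⟫ * ⟪w, A w⟫ = ⟪v, A w⟫ * ⟪w, v⟫ + ⟪w, A v⟫ * ⟪v, w⟫

theorem laplacian_complexRayleigh_comp {A : H →L[ℂ] H} {F : ℂ → H} {z : ℂ}
    (hF : ContDiffAt ℂ 2 F z) (hz : F z ≠ 0) (hA : PolarizesAt A (F z) (deriv F z)) :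
    Δ (fun ζ => complexRayleigh A (F ζ)) z =
      -8 * fubiniStudy (F z) (deriv F z) * complexRayleigh A (F z) := by
  have hFd : DifferentiableAt ℂ F z := hF.differentiableAt two_ne_zero
  have hAF : ContDiffAt ℂ 2 (fun ζ => A (F ζ)) z := A.contDiff.contDiffAt.comp z hF
  have hAFd : DifferentiableAt ℂ (fun ζ => A (F ζ)) z := hAF.differentiableAt two_ne_zero
  have hderiv : deriv (fun ζ => A (F ζ)) z = A (deriv F z) :=
    (A.hasFDerivAt.comp_hasDerivAt z hFd.hasDerivAt).deriv
  have hw : ⟪F z, F z⟫ ≠ 0 := inner_self_ne_zero.mpr hz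
  have hFℝ : ContDiffAt ℝ 2 F z := hF.restrict_scalars ℝ
  have hAFℝ : ContDiffAt ℝ 2 (fun ζ => A (F ζ)) z := hAF.restrict_scalars ℝ
  simp only [complexRayleigh]
  rw [laplacian_div Complex.orthonormalBasisOneI (hFℝ.inner ℂ hAFℝ) (hFℝ.inner ℂ hFℝ) hw,
    laplacian_inner_of_holomorphic hF hAF, laplacian_inner_of_holomorphic hF hF,
    carreDuChamp_inner_of_holomorphic hFd hAFd hFd hFd,
    carreDuChamp_inner_of_holomorphic hFd hFd hFd hFd, hderiv, ofReal_fubiniStudy]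
  rw [PolarizesAt] at hA
  field_simp
  linear_combination 4 * ⟪F z, F z⟫ * hA

end Rayleigh

section SphereValued

open Laplacian InnerProductSpace Topology

theorem lap_eq_laplacian {f : E3 → V5} {x : E3} (hf : ContDiffAt ℝ 2 f x) : lap f x = Δ f x := by
  simp [lap, laplacian_eq_sum_fderiv_fderiv (EuclideanSpace.basisFun (Fin 3) ℝ) f,
    fderiv_fderiv_apply_eq hf]

/-- The inner product `vdot` of `ℝ ⊕ ℂ ⊕ ℂ` as a continuous bilinear map. -/
def vdotL : V5 →L[ℝ] V5 →L[ℝ] ℝ :=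
  (LinearMap.mk₂ ℝ vdot
    (fun p q r => by simp [vdot]; ring) (fun c p q => by simp [vdot]; ring)
    (fun p q r => by simp [vdot]; ring) (fun c p q => by simp [vdot]; ring)).toContinuousBilinearMap

theorem vdotL_apply (p q : V5) : vdotL p q = vdot p q := rfl

theorem vdot_self (p : V5) : vdot p p = nsq p := by
  simp [vdot, nsq, Complex.mul_conj, pow_two]

theorem gradSq_eq_neg_vdot_lap {f : E3 → V5} {x : E3} (hf : ContDiffAt ℝ 2 f x)
    (hnsq : ∀ᶠ y in 𝓝 x, nsq (f y) = 1) : gradSq f x = -vdot (f x) (lap f x) := by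
  have hconst : (fun y => vdotL (f y) (f y)) =ᶠ[𝓝 x] fun _ => 1 := by
    filter_upwards [hnsq] with y hy
    rw [vdotL_apply, vdot_self, hy]
  have key := laplacian_bilinear (EuclideanSpace.basisFun (Fin 3) ℝ) vdotL hf hf
  rw [(laplacian_congr_nhds hconst).eq_of_nhds, laplacian_const, ← lap_eq_laplacian hf] at key
  have hsymm : vdot (lap f x) (f x) = vdot (f x) (lap f x) := by simp [vdot]; ring
  simp only [vdotL_apply, vdot_self, EuclideanSpace.basisFun_apply, hsymm, smul_eq_mul] at key
  rw [gradSq]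
  simp only [Pi.zero_apply] at key
  linarith

theorem gradSq_eq_of_lap_eq_neg_smul {f : E3 → V5} {x : E3} {c : ℝ} (hf : ContDiffAt ℝ 2 f x)
    (hnsq : ∀ᶠ y in 𝓝 x, nsq (f y) = 1) (hlap : lap f x = -c • f x) : gradSq f x = c := by
  rw [gradSq_eq_neg_vdot_lap hf hnsq, hlap, ← vdotL_apply, map_smul, vdotL_apply, vdot_self,
    hnsq.self_of_nhds]
  simp

end SphereValued

section Twistor

open Laplacian InnerProductSpace Matrix

local notation "ℂ⁴" => EuclideanSpace ℂ (Fin 4)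

/-- The twistor fibration `τ` as a function on `ℂ⁴`; at `0` it takes the junk value `0`. -/
def twistor (w : ℂ⁴) : V5 := tau4 (w 0) (w 1) (w 2) (w 3)

/-- The operators on `ℂ⁴` whose Rayleigh quotients are the three components of `twistor`. -/
def twistorOp : Fin 3 → (ℂ⁴ →L[ℂ] ℂ⁴) :=
  ![toEuclideanCLM (n := Fin 4) (𝕜 := ℂ) !![1, 0, 0, 0; 0, -1, 0, 0; 0, 0, -1, 0; 0, 0, 0, 1],
    toEuclideanCLM (n := Fin 4) (𝕜 := ℂ) !![0, 2, 0, 0; 0, 0, 0, 0; 0, 0, 0, 2; 0, 0, 0, 0],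
    toEuclideanCLM (n := Fin 4) (𝕜 := ℂ) !![0, 0, 2, 0; 0, 0, 0, -2; 0, 0, 0, 0; 0, 0, 0, 0]]

theorem inner_eq_sum_four (v w : ℂ⁴) :
    inner ℂ v w =
      conj' (v 0) * w 0 + conj' (v 1) * w 1 + conj' (v 2) * w 2 + conj' (v 3) * w 3 := by
  simp [PiLp.inner_apply, Fin.sum_univ_four, conj', mul_comm]

theorem inner_twistorOp_zero (v w : ℂ⁴) : inner ℂ v (twistorOp 0 w) =
    conj' (v 0) * w 0 - conj' (v 1) * w 1 - conj' (v 2) * w 2 + conj' (v 3) * w 3 := by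
  simp only [twistorOp, Fin.isValue, cons_val_zero, inner_eq_sum_four, ofLp_toEuclideanCLM,
    mulVec, dotProduct, of_apply, cons_val', cons_val_fin_one, Fin.sum_univ_four, one_mul,
    cons_val_one, zero_mul, add_zero, cons_val, neg_mul, zero_add, mul_neg, add_left_inj]
  ring

theorem inner_twistorOp_one (v w : ℂ⁴) :
    inner ℂ v (twistorOp 1 w) = 2 * (conj' (v 0) * w 1 + conj' (v 2) * w 3) := by
  simp only [twistorOp, Fin.isValue, cons_val_one, cons_val_zero, inner_eq_sum_four,
    ofLp_toEuclideanCLM, mulVec, dotProduct, of_apply, cons_val', cons_val_fin_one,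
    Fin.sum_univ_four, zero_mul, zero_add, cons_val, add_zero, mul_zero]
  ring

theorem inner_twistorOp_two (v w : ℂ⁴) :
    inner ℂ v (twistorOp 2 w) = 2 * (conj' (v 0) * w 2 - conj' (v 1) * w 3) := by
  simp only [twistorOp, Fin.isValue, cons_val, inner_eq_sum_four, ofLp_toEuclideanCLM, mulVec,
    dotProduct, of_apply, cons_val', cons_val_fin_one, cons_val_zero, Fin.sum_univ_four, zero_mul,
    cons_val_one, add_zero, zero_add, neg_mul, mul_neg, mul_zero]
  ring

theorem inner_self_eq_sum_normSq (w : ℂ⁴) : inner ℂ w w = ((Complex.normSq (w 0) +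
    Complex.normSq (w 1) + Complex.normSq (w 2) + Complex.normSq (w 3) : ℝ) : ℂ) := by
  simp only [inner_eq_sum_four, conj', ← Complex.normSq_eq_conj_mul_self]
  push_cast
  rfl

theorem twistor_eq_complexRayleigh (w : ℂ⁴) :
    ((twistor w).1 : ℂ) = complexRayleigh (twistorOp 0) w ∧
      (twistor w).2.1 = complexRayleigh (twistorOp 1) w ∧
      (twistor w).2.2 = complexRayleigh (twistorOp 2) w := by
  refine ⟨?_, ?_, ?_⟩
  · simp only [complexRayleigh, inner_twistorOp_zero, inner_self_eq_sum_normSq, twistor, tau4,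
      conj', ← Complex.normSq_eq_conj_mul_self]
    push_cast
    ring
  · rw [complexRayleigh, inner_twistorOp_one, inner_self_eq_sum_normSq, twistor, tau4]
  · rw [complexRayleigh, inner_twistorOp_two, inner_self_eq_sum_normSq, twistor, tau4]

/-- Horizontality with respect to the twistor fibration: `v` lies in the kernel of the contact form
`w₀ dw₃ - w₃ dw₀ + w₁ dw₂ - w₂ dw₁`. -/
def Horizontal (w v : ℂ⁴) : Prop := w 0 * v 3 - w 3 * v 0 + w 1 * v 2 - w 2 * v 1 = 0

theorem Horizontal.polarizesAt {w v : ℂ⁴} (h : Horizontal w v) (i : Fin 3) :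
    PolarizesAt (twistorOp i) w v := by
  have h' : conj' (w 0) * conj' (v 3) - conj' (w 3) * conj' (v 0)
      + conj' (w 1) * conj' (v 2) - conj' (w 2) * conj' (v 1) = 0 := by
    simpa [conj'] using congrArg conj' h
  rw [Horizontal] at h
  fin_cases i
  · simp only [PolarizesAt, Fin.zero_eta, inner_twistorOp_zero]
    simp only [inner_eq_sum_four]
    linear_combination 2 * (conj' (w 0) * conj' (v 3) - conj' (w 3) * conj' (v 0)) * h
      - 2 * (w 1 * v 2 - w 2 * v 1) * h'
  · simp only [PolarizesAt, Fin.mk_one, inner_twistorOp_one]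
    simp only [inner_eq_sum_four]
    linear_combination 2 * (conj' (w 0) * conj' (v 2) - conj' (w 2) * conj' (v 0)) * h
      + 2 * (w 1 * v 3 - w 3 * v 1) * h'
  · simp only [PolarizesAt, Fin.reduceFinMk, inner_twistorOp_two]
    simp only [inner_eq_sum_four]
    linear_combination -2 * (conj' (w 0) * conj' (v 1) - conj' (w 1) * conj' (v 0)) * h
      + 2 * (w 2 * v 3 - w 3 * v 2) * h'

theorem sum_normSq_ne_zero {w : ℂ⁴} (hw : w ≠ 0) : Complex.normSq (w 0) +
    Complex.normSq (w 1) + Complex.normSq (w 2) + Complex.normSq (w 3) ≠ 0 := by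
  have := inner_self_ne_zero (𝕜 := ℂ).mpr hw
  rw [inner_self_eq_sum_normSq] at this
  exact_mod_cast this

theorem nsq_twistor {w : ℂ⁴} (hw : w ≠ 0) : nsq (twistor w) = 1 := by
  have hD := sum_normSq_ne_zero hw
  simp only [nsq, twistor, tau4, Complex.normSq_div, Complex.normSq_ofReal]
  field_simp
  simp only [Complex.normSq_apply, conj', Complex.mul_re, Complex.mul_im, Complex.add_re,
    Complex.add_im, Complex.sub_re, Complex.sub_im, Complex.conj_re, Complex.conj_im,
    Complex.re_ofNat, Complex.im_ofNat]
  ring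

theorem twistor_smul {c : ℂ} (hc : c ≠ 0) (w : ℂ⁴) : twistor (c • w) = twistor w := by
  have hrayleigh (A : ℂ⁴ →L[ℂ] ℂ⁴) : complexRayleigh A (c • w) = complexRayleigh A w := by
    have hcc : (starRingEnd ℂ) c ≠ 0 := by simpa
    simp only [complexRayleigh, map_smul, inner_smul_left, inner_smul_right, ← mul_assoc]
    exact mul_div_mul_left _ _ (mul_ne_zero hc hcc)
  obtain ⟨h₀, h₁, h₂⟩ := twistor_eq_complexRayleigh w
  obtain ⟨h₀', h₁', h₂'⟩ := twistor_eq_complexRayleigh (c • w)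
  refine Prod.ext (Complex.ofReal_injective ?_) (Prod.ext ?_ ?_)
  · rw [h₀, h₀', hrayleigh]
  · rw [h₁, h₁', hrayleigh]
  · rw [h₂, h₂', hrayleigh]

theorem contDiffAt_twistor {n : ℕ∞} {w : ℂ⁴} (hw : w ≠ 0) : ContDiffAt ℝ n twistor w := by
  have hcoord (i : Fin 4) : ContDiff ℝ n fun u : ℂ⁴ => u i :=
    ((EuclideanSpace.proj i : ℂ⁴ →L[ℂ] ℂ).restrictScalars ℝ).contDiff
  have hconj (i : Fin 4) : ContDiff ℝ n fun u : ℂ⁴ => conj' (u i) :=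
    Complex.conjCLE.contDiff.comp (hcoord i)
  have hnormSq (i : Fin 4) : ContDiff ℝ n fun u : ℂ⁴ => Complex.normSq (u i) := by
    simp only [Complex.normSq_apply]
    have hre := Complex.reCLM.contDiff.comp (hcoord i)
    have him := Complex.imCLM.contDiff.comp (hcoord i)
    exact (hre.mul hre).add (him.mul him)
  have hD : ContDiff ℝ n fun u : ℂ⁴ => Complex.normSq (u 0) + Complex.normSq (u 1) +
      Complex.normSq (u 2) + Complex.normSq (u 3) := by fun_prop
  have hDw := sum_normSq_ne_zero hw
  have hDinv := (hD.contDiffAt (x := w)).fun_inv hDw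
  have hDinv' := ((Complex.ofRealCLM.contDiff.comp hD).contDiffAt (x := w)).fun_inv
    (Complex.ofReal_ne_zero.mpr hDw)
  unfold twistor tau4
  simp only [div_eq_mul_inv]
  refine ContDiffAt.prodMk (.mul (by fun_prop) hDinv) (.prodMk (.mul (by fun_prop) hDinv')
    (.mul (by fun_prop) hDinv'))

theorem laplacian_twistor_comp {F : ℂ → ℂ⁴} {z : ℂ} (hF : ContDiffAt ℂ 2 F z) (hz : F z ≠ 0)
    (hhor : Horizontal (F z) (deriv F z)) :
    Δ (twistor ∘ F) z = -(8 * fubiniStudy (F z) (deriv F z)) • twistor (F z) := by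
  have hsmooth : ContDiffAt ℝ 2 (twistor ∘ F) z :=
    (contDiffAt_twistor (n := 2) hz).comp z (hF.restrict_scalars ℝ)
  have component (l : V5 →L[ℝ] ℂ) (i : Fin 3)
      (hl : ∀ w, l (twistor w) = complexRayleigh (twistorOp i) w) :
      l (Δ (twistor ∘ F) z) = l (-(8 * fubiniStudy (F z) (deriv F z)) • twistor (F z)) := by
    have hcomp : l ∘ twistor ∘ F = fun ζ => complexRayleigh (twistorOp i) (F ζ) :=
      funext fun ζ => hl (F ζ)
    rw [← Function.comp_apply (f := l), ← hsmooth.laplacian_CLM_comp_left, hcomp,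
      laplacian_complexRayleigh_comp hF hz (hhor.polarizesAt i), map_smul, hl, Complex.real_smul]
    push_cast
    ring
  refine Prod.ext (Complex.ofReal_injective ?_) (Prod.ext ?_ ?_)
  · exact component (Complex.ofRealCLM ∘L .fst ℝ ℝ (ℂ × ℂ)) 0
      fun w => (twistor_eq_complexRayleigh w).1
  · exact component (.fst ℝ ℂ ℂ ∘L .snd ℝ ℝ (ℂ × ℂ)) 1
      fun w => (twistor_eq_complexRayleigh w).2.1
  · exact component (.snd ℝ ℂ ℂ ∘L .snd ℝ ℝ (ℂ × ℂ)) 2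
      fun w => (twistor_eq_complexRayleigh w).2.2

end Twistor

section Stereographic

open Laplacian InnerProductSpace Module

variable {ι E F : Type*} [Fintype ι] [NormedAddCommGroup E] [InnerProductSpace ℝ E]
  [NormedAddCommGroup F] [NormedSpace ℝ F]

local notation "⟪" x "," y "⟫" => inner ℝ x y

/-- The parabolic coordinate `‖x‖ + ⟪e, x⟫` with axis `e`: the denominator of the stereographic
projection from `-e` extended to a degree-zero homogeneous function. It vanishes exactly on the ray
spanned by `-e` when `e` is a unit vector. -/
def parabolicCoord (e x : E) : ℝ := ‖x‖ + ⟪e, x⟫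

theorem parabolicCoord_eq_zero_iff {e x : E} (he : ‖e‖ = 1) (hx : ‖x‖ = 1) :
    parabolicCoord e x = 0 ↔ x = -e := by
  rw [parabolicCoord, hx, add_comm, add_eq_zero_iff_eq_neg,
    inner_eq_neg_one_iff_of_norm_eq_one he hx, ← neg_eq_iff_eq_neg, eq_comm]

theorem ne_zero_of_parabolicCoord_ne_zero {e x : E} (hx : parabolicCoord e x ≠ 0) : x ≠ 0 := by
  rintro rfl
  simp [parabolicCoord] at hx

theorem parabolicCoord_ne_zero_or_neg {x : E} (e : E) (hx : x ≠ 0) :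
    parabolicCoord e x ≠ 0 ∨ parabolicCoord (-e) x ≠ 0 := by
  by_contra! h
  have : 2 * ‖x‖ = 0 := by
    have := congrArg₂ (· + ·) h.1 h.2
    simp only [parabolicCoord, inner_neg_left] at this
    linarith
  exact hx (by simpa using this)

theorem contDiffAt_parabolicCoord {n : WithTop ℕ∞} {e x : E} (hx : x ≠ 0) :
    ContDiffAt ℝ n (parabolicCoord e) x :=
  (contDiffAt_norm ℝ hx).add (innerSL ℝ e).contDiff.contDiffAt

theorem fderiv_norm_apply {x : E} (hx : x ≠ 0) (v : E) :
    fderiv ℝ (fun y : E => ‖y‖) x v = ⟪‖x‖⁻¹ • x, v⟫ := by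
  have hd : DifferentiableAt ℝ (fun y : E => ‖y‖) x :=
    (contDiffAt_norm ℝ hx (n := 1)).differentiableAt one_ne_zero
  have key : 2 * ⟪x, v⟫ = 2 * ‖x‖ * fderiv ℝ (fun y : E => ‖y‖) x v := by
    have := congrArg (· v) (fderiv_norm_sq_apply x)
    rw [fderiv_fun_pow 2 hd] at this
    simpa using this.symm
  have hr : ‖x‖ ≠ 0 := norm_ne_zero_iff.mpr hx
  rw [inner_smul_left, RCLike.conj_to_real]
  field_simp
  linarith

theorem fderiv_parabolicCoord_apply {e x : E} (hx : x ≠ 0) (v : E) :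
    fderiv ℝ (parabolicCoord e) x v = ⟪‖x‖⁻¹ • x + e, v⟫ := by
  have hnorm : DifferentiableAt ℝ (fun y : E => ‖y‖) x :=
    (contDiffAt_norm ℝ hx (n := 1)).differentiableAt one_ne_zero
  have hsum : parabolicCoord e = fun y => ‖y‖ + innerSL ℝ e y := rfl
  rw [hsum, fderiv_fun_add hnorm (innerSL ℝ e).differentiableAt, add_apply, fderiv_norm_apply hx,
    ContinuousLinearMap.fderiv, innerSL_apply_apply, inner_add_left]

theorem fderiv_ofReal_comp_apply {f : E → ℝ} {x : E} (hf : DifferentiableAt ℝ f x) (v : E) :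
    fderiv ℝ (fun y => (f y : ℂ)) x v = (fderiv ℝ f x v : ℂ) := by
  change fderiv ℝ (Complex.ofRealCLM ∘ f) x v = _
  rw [fderiv_comp x Complex.ofRealCLM.differentiableAt hf, ContinuousLinearMap.fderiv]
  rfl

section FiniteDimensional

variable [FiniteDimensional ℝ E]

theorem laplacian_continuousLinearMap (l : E →L[ℝ] F) (x : E) : Δ (l : E → F) x = 0 := by
  have hfderiv : fderiv ℝ l = fun _ => l := funext fun y => l.fderiv
  simp [laplacian_eq_sum_fderiv_fderiv (stdOrthonormalBasis ℝ E), hfderiv]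

theorem laplacian_norm {x : E} (hx : x ≠ 0) :
    Δ (fun y : E => ‖y‖) x = (finrank ℝ E - 1) / ‖x‖ := by
  have b := stdOrthonormalBasis ℝ E
  have hr : ‖x‖ ≠ 0 := norm_ne_zero_iff.mpr hx
  have hsq : Δ (fun y : E => ‖y‖ * ‖y‖) x = 2 * finrank ℝ E := by
    have hid : Δ (fun y : E => y) x = 0 := laplacian_continuousLinearMap (.id ℝ E) x
    have key : Δ (fun y : E => ⟪y, y⟫) x = ⟪Δ (fun y : E => y) x, x⟫
        + (2 : ℝ) • ∑ i, ⟪fderiv ℝ (fun y : E => y) x (b i), fderiv ℝ (fun y : E => y) x (b i)⟫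
        + ⟪x, Δ (fun y : E => y) x⟫ :=
      laplacian_bilinear b (innerSL ℝ) contDiffAt_fun_id contDiffAt_fun_id
    simpa [hid, fderiv_fun_id, pow_two] using key
  have hgrad : carreDuChamp b (fun y : E => ‖y‖) (fun y => ‖y‖) x = 1 := by
    simp only [carreDuChamp, fderiv_norm_apply hx, ← pow_two, b.sum_sq_inner_left]
    simp [norm_smul, hr]
  have key := laplacian_mul b (contDiffAt_norm ℝ hx) (contDiffAt_norm ℝ hx)
  rw [hsq, hgrad] at key
  field_simp
  linarith

theorem laplacian_parabolicCoord {e x : E} (hx : x ≠ 0) :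
    Δ (parabolicCoord e) x = (finrank ℝ E - 1) / ‖x‖ := by
  have key := (contDiffAt_norm ℝ hx).laplacian_add (innerSL ℝ e).contDiff.contDiffAt
  rw [laplacian_continuousLinearMap, add_zero] at key
  rw [← laplacian_norm hx]
  exact key

end FiniteDimensional

theorem carreDuChamp_continuousLinearMap_parabolicCoord (b : OrthonormalBasis ι ℝ E)
    (l : E →L[ℝ] ℂ) {e x : E} (hle : l e = 0) (hx : x ≠ 0) :
    carreDuChamp b l (fun y => (parabolicCoord e y : ℂ)) x = l x / ‖x‖ := by
  have hd := (contDiffAt_parabolicCoord (n := 1) (e := e) hx).differentiableAt one_ne_zero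
  have hsum (g : E) : ∑ i, l (b i) * (⟪g, b i⟫ : ℂ) = l g := by
    conv_rhs => rw [← b.sum_repr' g]
    simp only [map_sum, map_smul, Complex.real_smul, mul_comm, real_inner_comm]
  simp only [carreDuChamp, l.fderiv, fderiv_ofReal_comp_apply hd, fderiv_parabolicCoord_apply hx,
    hsum, map_add, map_smul, hle, add_zero, Complex.real_smul, Complex.ofReal_inv]
  rw [div_eq_inv_mul]

theorem carreDuChamp_parabolicCoord (b : OrthonormalBasis ι ℝ E) {e x : E} (he : ‖e‖ = 1)
    (hx : x ≠ 0) :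
    carreDuChamp b (fun y => (parabolicCoord e y : ℂ)) (fun y => (parabolicCoord e y : ℂ)) x =
      2 * parabolicCoord e x / ‖x‖ := by
  have hd := (contDiffAt_parabolicCoord (n := 1) (e := e) hx).differentiableAt one_ne_zero
  have hr : ‖x‖ ≠ 0 := norm_ne_zero_iff.mpr hx
  have hgrad : ‖‖x‖⁻¹ • x + e‖ ^ 2 = 2 * parabolicCoord e x / ‖x‖ := by
    rw [norm_add_sq_real, norm_smul, norm_inv, norm_norm, inv_mul_cancel₀ hr, he, inner_smul_left,
      RCLike.conj_to_real, parabolicCoord, real_inner_comm]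
    field_simp
    ring
  simp only [carreDuChamp, fderiv_ofReal_comp_apply hd, fderiv_parabolicCoord_apply hx, ← pow_two]
  rw [← Complex.ofReal_ofNat, ← Complex.ofReal_mul, ← Complex.ofReal_div, ← hgrad,
    ← b.sum_sq_inner_left]
  push_cast
  rfl

/-- The stereographic coordinate `l x / (‖x‖ + ⟪e, x⟫)` from the pole `-e`, extended to be
homogeneous of degree zero. The linear map `l` identifies the plane orthogonal to `e` with `ℂ`. -/
def stereographicCoord (l : E →L[ℝ] ℂ) (e x : E) : ℂ := l x / parabolicCoord e x

theorem carreDuChamp_stereographicCoord (b : OrthonormalBasis ι ℝ E) {l m : E →L[ℝ] ℂ} {e x : E}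
    (he : ‖e‖ = 1) (hle : l e = 0) (hme : m e = 0) (hx : parabolicCoord e x ≠ 0) :
    carreDuChamp b (stereographicCoord l e) (stereographicCoord m e) x =
      (∑ i, l (b i) * m (b i)) / parabolicCoord e x ^ 2 := by
  have hx₀ := ne_zero_of_parabolicCoord_ne_zero hx
  have hd : DifferentiableAt ℝ (fun y => (parabolicCoord e y : ℂ)) x :=
    (Complex.ofRealCLM.contDiff.contDiffAt.comp x
      (contDiffAt_parabolicCoord (n := 1) hx₀)).differentiableAt one_ne_zero
  have hdx : (parabolicCoord e x : ℂ) ≠ 0 := Complex.ofReal_ne_zero.mpr hx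
  have hr : (‖x‖ : ℂ) ≠ 0 := Complex.ofReal_ne_zero.mpr (norm_ne_zero_iff.mpr hx₀)
  have hlm : carreDuChamp b l m x = ∑ i, l (b i) * m (b i) := by
    simp only [carreDuChamp, ContinuousLinearMap.fderiv]
  change carreDuChamp b (fun y => l y / parabolicCoord e y)
    (fun y => m y / parabolicCoord e y) x = _
  rw [carreDuChamp_div_left b _ l.differentiableAt hd hdx, carreDuChamp_comm b l,
    carreDuChamp_comm b _ (fun y => m y / parabolicCoord e y)]
  rw [carreDuChamp_div_left b _ m.differentiableAt hd hdx,
    carreDuChamp_div_left b _ m.differentiableAt hd hdx, carreDuChamp_parabolicCoord b he hx₀,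
    carreDuChamp_continuousLinearMap_parabolicCoord b m hme hx₀,
    carreDuChamp_comm b m, hlm, carreDuChamp_comm b _ l,
    carreDuChamp_continuousLinearMap_parabolicCoord b l hle hx₀]
  field_simp
  ring

theorem laplacian_stereographicCoord [FiniteDimensional ℝ E] (hE : finrank ℝ E = 3)
    {l : E →L[ℝ] ℂ} {e x : E} (he : ‖e‖ = 1) (hle : l e = 0) (hx : parabolicCoord e x ≠ 0) :
    Δ (stereographicCoord l e) x = 0 := by
  have b := stdOrthonormalBasis ℝ E
  have hx₀ := ne_zero_of_parabolicCoord_ne_zero hx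
  have hp := contDiffAt_parabolicCoord (n := 2) (e := e) hx₀
  have hd : ContDiffAt ℝ 2 (fun y => (parabolicCoord e y : ℂ)) x :=
    Complex.ofRealCLM.contDiff.contDiffAt.comp x hp
  have hdx : (parabolicCoord e x : ℂ) ≠ 0 := Complex.ofReal_ne_zero.mpr hx
  have hr : (‖x‖ : ℂ) ≠ 0 := Complex.ofReal_ne_zero.mpr (norm_ne_zero_iff.mpr hx₀)
  have hΔd : Δ (fun y => (parabolicCoord e y : ℂ)) x = 2 / ‖x‖ := by
    change Δ (Complex.ofRealCLM ∘ parabolicCoord e) x = _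
    rw [hp.laplacian_CLM_comp_left, Function.comp_apply, laplacian_parabolicCoord hx₀, hE]
    norm_num
  change Δ (fun y => l y / parabolicCoord e y) x = 0
  rw [laplacian_div b l.contDiff.contDiffAt hd hdx, laplacian_continuousLinearMap, hΔd,
    carreDuChamp_continuousLinearMap_parabolicCoord b l hle hx₀,
    carreDuChamp_parabolicCoord b he hx₀]
  field_simp
  ring

/-- The data of a stereographic coordinate: `e` is a unit vector and `l` is conformal and isometric
on the plane orthogonal to `e`, expressed in the orthonormal basis `b`. -/
structure IsStereographicFrame (b : OrthonormalBasis ι ℝ E) (l : E →L[ℝ] ℂ) (e : E) : Prop where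
  norm_axis : ‖e‖ = 1
  map_axis : l e = 0
  sum_sq : ∑ i, l (b i) ^ 2 = 0
  sum_norm_sq : ∑ i, ‖l (b i)‖ ^ 2 = 2

theorem contDiffAt_stereographicCoord {n : WithTop ℕ∞} (l : E →L[ℝ] ℂ) {e x : E}
    (hx : parabolicCoord e x ≠ 0) : ContDiffAt ℝ n (stereographicCoord l e) x := by
  have hp : ContDiffAt ℝ n (fun y => (parabolicCoord e y : ℂ)) x :=
    Complex.ofRealCLM.contDiff.contDiffAt.comp x
      (contDiffAt_parabolicCoord (ne_zero_of_parabolicCoord_ne_zero hx))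
  exact l.contDiff.contDiffAt.mul (hp.inv (Complex.ofReal_ne_zero.mpr hx))

theorem parabolicCoord_smul {c : ℝ} (hc : 0 ≤ c) (e x : E) :
    parabolicCoord e (c • x) = c * parabolicCoord e x := by
  rw [parabolicCoord, parabolicCoord, norm_smul, Real.norm_of_nonneg hc, inner_smul_right]
  ring

theorem stereographicCoord_smul {c : ℝ} (hc : 0 < c) (l : E →L[ℝ] ℂ) (e x : E) :
    stereographicCoord l e (c • x) = stereographicCoord l e x := by
  rw [stereographicCoord, stereographicCoord, parabolicCoord_smul hc.le, map_smul,
    Complex.real_smul, Complex.ofReal_mul]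
  exact mul_div_mul_left _ _ (Complex.ofReal_ne_zero.mpr hc.ne')

namespace IsStereographicFrame

variable {b : OrthonormalBasis ι ℝ E} {l : E →L[ℝ] ℂ} {e x : E}

theorem sum_fderiv_sq (h : IsStereographicFrame b l e) (hx : parabolicCoord e x ≠ 0) :
    ∑ i, fderiv ℝ (stereographicCoord l e) x (b i) ^ 2 = 0 := by
  have key := carreDuChamp_stereographicCoord b h.norm_axis h.map_axis h.map_axis hx
  simp only [← pow_two, h.sum_sq, zero_div] at key
  simpa only [carreDuChamp, ← pow_two] using key

theorem sum_norm_fderiv_sq (h : IsStereographicFrame b l e) (hx : parabolicCoord e x ≠ 0) :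
    ∑ i, ‖fderiv ℝ (stereographicCoord l e) x (b i)‖ ^ 2 = 2 / parabolicCoord e x ^ 2 := by
  let conjL : ℂ →L[ℝ] ℂ := Complex.conjCLE
  have hd : DifferentiableAt ℝ (stereographicCoord l e) x :=
    (contDiffAt_stereographicCoord (n := 1) l hx).differentiableAt one_ne_zero
  have hconj : stereographicCoord (conjL ∘L l) e = conjL ∘ stereographicCoord l e := by
    ext y
    simp [conjL, stereographicCoord]
  have key := carreDuChamp_stereographicCoord b h.norm_axis h.map_axis (m := conjL ∘L l)
    (by simp [h.map_axis]) hx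
  rw [hconj] at key
  simp only [carreDuChamp, fderiv_comp x conjL.differentiableAt hd, ContinuousLinearMap.fderiv,
    ContinuousLinearMap.comp_apply] at key
  simp only [conjL, ContinuousLinearEquiv.coe_coe, Complex.conjCLE_apply, Complex.mul_conj,
    Complex.normSq_eq_norm_sq] at key
  rw [← h.sum_norm_sq]
  exact_mod_cast key

theorem laplacian_comp [FiniteDimensional ℝ E] (h : IsStereographicFrame b l e)
    (hE : finrank ℝ E = 3) (hx : parabolicCoord e x ≠ 0) {u : ℂ → F}
    (hu : ContDiffAt ℝ 2 u (stereographicCoord l e x)) :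
    Δ (u ∘ stereographicCoord l e) x =
      (1 / parabolicCoord e x ^ 2) • Δ u (stereographicCoord l e x) := by
  rw [laplacian_comp_of_conformal b hu (contDiffAt_stereographicCoord l hx)
    (laplacian_stereographicCoord hE h.norm_axis h.map_axis hx) (h.sum_fderiv_sq hx),
    h.sum_norm_fderiv_sq hx]
  congr 1
  ring

end IsStereographicFrame

end Stereographic

section HorizontalCurves

open Laplacian InnerProductSpace Topology

local notation "ℂ⁴" => EuclideanSpace ℂ (Fin 4)

/-- An entire curve in `ℂ⁴ ∖ {0}` that is horizontal for the twistor fibration. -/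
structure IsHorizontalCurve (F : ℂ → ℂ⁴) : Prop where
  differentiable : Differentiable ℂ F
  ne_zero : ∀ z, F z ≠ 0
  horizontal : ∀ z, Horizontal (F z) (deriv F z)

/-- The curve `F` lifts the sphere map `ω` through the twistor fibration, away from the pole `-e`,
in the stereographic coordinate given by `l` and `e`. -/
def IsTwistorLift (l : E3 →L[ℝ] ℂ) (e : E3) (F : ℂ → ℂ⁴) (ω : E3 → V5) : Prop :=
  ∀ x ∈ sphere2, parabolicCoord e x ≠ 0 → ω x = twistor (F (stereographicCoord l e x))

namespace IsTwistorLift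

variable {l : E3 →L[ℝ] ℂ} {e x : E3} {F : ℂ → ℂ⁴} {ω : E3 → V5}

theorem homExt_eq (h : IsTwistorLift l e F ω) (hx : parabolicCoord e x ≠ 0) :
    homExt ω x = twistor (F (stereographicCoord l e x)) := by
  have hr : 0 < ‖x‖⁻¹ :=
    inv_pos.mpr (norm_pos_iff.mpr (ne_zero_of_parabolicCoord_ne_zero hx))
  have hmem : ‖x‖⁻¹ • x ∈ sphere2 := by
    simp [sphere2, norm_smul, (inv_pos.mp hr).ne']
  rw [homExt, h _ hmem, stereographicCoord_smul hr]
  rw [parabolicCoord_smul hr.le]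
  exact mul_ne_zero hr.ne' hx

theorem homExt_eventuallyEq (h : IsTwistorLift l e F ω) (hx : parabolicCoord e x ≠ 0) :
    homExt ω =ᶠ[𝓝 x] (twistor ∘ F) ∘ stereographicCoord l e := by
  have hcont : ContinuousAt (parabolicCoord e) x :=
    (contDiffAt_parabolicCoord (n := 0) (ne_zero_of_parabolicCoord_ne_zero hx)).continuousAt
  filter_upwards [hcont.eventually_ne hx] with y hy using h.homExt_eq hy

theorem nsq_homExt_eventuallyEq_one (h : IsTwistorLift l e F ω) (hF : IsHorizontalCurve F)
    (hx : parabolicCoord e x ≠ 0) : ∀ᶠ y in 𝓝 x, nsq (homExt ω y) = 1 := by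
  filter_upwards [h.homExt_eventuallyEq hx] with y hy
  rw [hy]
  exact nsq_twistor (hF.ne_zero _)

theorem contDiffAt_homExt {n : ℕ∞} (h : IsTwistorLift l e F ω) (hF : IsHorizontalCurve F)
    (hx : parabolicCoord e x ≠ 0) : ContDiffAt ℝ n (homExt ω) x := by
  have hF' : ContDiff ℝ n F := hF.differentiable.contDiff.restrict_scalars ℝ
  refine ContDiffAt.congr_of_eventuallyEq ?_ (h.homExt_eventuallyEq hx)
  exact ((contDiffAt_twistor (hF.ne_zero _)).comp _ hF'.contDiffAt).comp x
    (contDiffAt_stereographicCoord l hx)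

theorem lap_homExt (h : IsTwistorLift l e F ω) (hF : IsHorizontalCurve F)
    (hle : IsStereographicFrame (EuclideanSpace.basisFun (Fin 3) ℝ) l e)
    (hx : parabolicCoord e x ≠ 0) :
    lap (homExt ω) x = -(8 * fubiniStudy (F (stereographicCoord l e x))
      (deriv F (stereographicCoord l e x)) / parabolicCoord e x ^ 2) • homExt ω x := by
  have hF' : ContDiff ℂ 2 F := hF.differentiable.contDiff
  have hu : ContDiffAt ℝ 2 (twistor ∘ F) (stereographicCoord l e x) :=
    (contDiffAt_twistor (n := 2) (hF.ne_zero _)).comp _ (hF'.restrict_scalars ℝ).contDiffAt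
  have hω : ContDiffAt ℝ 2 (homExt ω) x := h.contDiffAt_homExt (n := 2) hF hx
  rw [lap_eq_laplacian hω, (laplacian_congr_nhds (h.homExt_eventuallyEq hx)).eq_of_nhds,
    hle.laplacian_comp finrank_euclideanSpace_fin hx hu,
    laplacian_twistor_comp hF'.contDiffAt (hF.ne_zero _) (hF.horizontal _), smul_smul,
    h.homExt_eq hx]
  congr 1
  ring

theorem gradSq_homExt (h : IsTwistorLift l e F ω) (hF : IsHorizontalCurve F)
    (hle : IsStereographicFrame (EuclideanSpace.basisFun (Fin 3) ℝ) l e)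
    (hx : parabolicCoord e x ≠ 0) :
    gradSq (homExt ω) x = 8 * fubiniStudy (F (stereographicCoord l e x))
      (deriv F (stereographicCoord l e x)) / parabolicCoord e x ^ 2 :=
  gradSq_eq_of_lap_eq_neg_smul (h.contDiffAt_homExt (n := 2) hF hx)
    (h.nsq_homExt_eventuallyEq_one hF hx) (h.lap_homExt hF hle hx)

theorem lap_add_gradSq_smul (h : IsTwistorLift l e F ω) (hF : IsHorizontalCurve F)
    (hle : IsStereographicFrame (EuclideanSpace.basisFun (Fin 3) ℝ) l e)
    (hx : parabolicCoord e x ≠ 0) :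
    lap (homExt ω) x + gradSq (homExt ω) x • homExt ω x = 0 := by
  rw [h.lap_homExt hF hle hx, h.gradSq_homExt hF hle hx, neg_smul, neg_add_cancel]

end IsTwistorLift

theorem isHarmonicSphere_of_isTwistorLift {l m : E3 →L[ℝ] ℂ} {e : E3} {F G : ℂ → ℂ⁴} {ω : E3 → V5}
    (hl : IsStereographicFrame (EuclideanSpace.basisFun (Fin 3) ℝ) l e)
    (hm : IsStereographicFrame (EuclideanSpace.basisFun (Fin 3) ℝ) m (-e))
    (hF : IsHorizontalCurve F) (hG : IsHorizontalCurve G)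
    (hFω : IsTwistorLift l e F ω) (hGω : IsTwistorLift m (-e) G ω) : IsHarmonicSphere ω := by
  refine ⟨fun x hx => ?_, fun x hx => ContDiffAt.contDiffWithinAt ?_, fun x hx => ?_⟩
  · have hx₀ : x ≠ 0 := by
      rintro rfl
      simp [sphere2] at hx
    rcases parabolicCoord_ne_zero_or_neg e hx₀ with h | h
    · rw [hFω x hx h, nsq_twistor (hF.ne_zero _)]
    · rw [hGω x hx h, nsq_twistor (hG.ne_zero _)]
  · rcases parabolicCoord_ne_zero_or_neg e hx with h | h
    · exact hFω.contDiffAt_homExt hF h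
    · exact hGω.contDiffAt_homExt hG h
  · rcases parabolicCoord_ne_zero_or_neg e hx with h | h
    · exact hFω.lap_add_gradSq_smul hF hl h
    · exact hGω.lap_add_gradSq_smul hG hm h

end HorizontalCurves

section Family

local notation "ℂ⁴" => EuclideanSpace ℂ (Fin 4)

theorem deriv_euclidean_apply {ι : Type*} [Finite ι] {F : ℂ → EuclideanSpace ℂ ι} {z : ℂ}
    (hF : DifferentiableAt ℂ F z) (i : ι) : (deriv F z) i = deriv (fun ζ => F ζ i) z := by
  have := Fintype.ofFinite ι
  exact (((EuclideanSpace.proj i).hasFDerivAt.comp_hasDerivAt z hF.hasDerivAt).deriv).symm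

/-- The algebraic curve `Ψ` whose twistor projection is `liftCurve`. -/
def twistorCurve (μ₁ μ₂ z₀ z₁ : ℂ) : ℂ⁴ :=
  !₂[z₀ ^ 3, μ₁ * z₀ ^ 2 * z₁, μ₂ * z₀ * z₁ ^ 2, -(μ₁ * μ₂ / 3) * z₁ ^ 3]

theorem twistor_twistorCurve (μ₁ μ₂ z₀ z₁ : ℂ) :
    twistor (twistorCurve μ₁ μ₂ z₀ z₁) = liftCurve μ₁ μ₂ z₀ z₁ := rfl

theorem twistorCurve_mul (μ₁ μ₂ c z₀ z₁ : ℂ) :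
    twistorCurve μ₁ μ₂ (c * z₀) (c * z₁) = c ^ 3 • twistorCurve μ₁ μ₂ z₀ z₁ := by
  ext i
  fin_cases i <;> simp [twistorCurve] <;> ring

theorem liftCurve_mul {c : ℂ} (hc : c ≠ 0) (μ₁ μ₂ z₀ z₁ : ℂ) :
    liftCurve μ₁ μ₂ (c * z₀) (c * z₁) = liftCurve μ₁ μ₂ z₀ z₁ := by
  rw [← twistor_twistorCurve, twistorCurve_mul, twistor_smul (pow_ne_zero 3 hc),
    twistor_twistorCurve]

theorem liftCurve_eq_explicitFam (μ₁ μ₂ z₀ z₁ : ℂ) :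
    liftCurve μ₁ μ₂ z₀ z₁ = explicitFam μ₁ μ₂ z₀ z₁ := by
  have hD : Complex.normSq (z₀ ^ 3) + Complex.normSq (μ₁ * z₀ ^ 2 * z₁) +
      Complex.normSq (μ₂ * z₀ * z₁ ^ 2) + Complex.normSq (-(μ₁ * μ₂ / 3) * z₁ ^ 3) =
      Dfun μ₁ μ₂ z₀ z₁ := by
    simp only [Dfun, map_mul, map_pow, Complex.normSq_neg, map_div₀, Complex.normSq_ofNat]
    ring
  rw [liftCurve, tau4, explicitFam, hD]
  refine Prod.ext ?_ (Prod.ext ?_ ?_)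
  · simp only [map_mul, map_pow, Complex.normSq_neg, map_div₀, Complex.normSq_ofNat]
    ring
  · simp only [conj']
    congr 1
    push_cast
    simp only [Complex.normSq_eq_conj_mul_self, map_mul, map_pow]
    ring
  · simp only [conj']
    congr 1
    push_cast
    simp only [Complex.normSq_eq_conj_mul_self, map_mul, map_pow]
    ring

theorem differentiable_northCurve (μ₁ μ₂ : ℂ) : Differentiable ℂ (twistorCurve μ₁ μ₂ 1) := by
  rw [differentiable_euclidean]
  intro i
  fin_cases i <;> dsimp [twistorCurve] <;> fun_prop

theorem deriv_northCurve (μ₁ μ₂ ζ : ℂ) :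
    deriv (twistorCurve μ₁ μ₂ 1) ζ = !₂[0, μ₁, 2 * μ₂ * ζ, -(μ₁ * μ₂) * ζ ^ 2] := by
  ext i
  rw [deriv_euclidean_apply (differentiable_northCurve μ₁ μ₂ ζ)]
  fin_cases i <;> simp [twistorCurve] <;> ring

theorem isHorizontalCurve_northCurve (μ₁ μ₂ : ℂ) : IsHorizontalCurve (twistorCurve μ₁ μ₂ 1) where
  differentiable := differentiable_northCurve μ₁ μ₂
  ne_zero ζ h := by simpa [twistorCurve] using congrArg (fun w : ℂ⁴ => w 0) h
  horizontal ζ := by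
    rw [deriv_northCurve]
    simp only [Horizontal, Fin.isValue, twistorCurve, one_pow, mul_one, neg_mul,
      Matrix.cons_val_zero, Matrix.cons_val, mul_neg, one_mul, mul_zero, sub_zero,
      Matrix.cons_val_one]
    ring

/-- The curve `w ↦ Ψ(w, 1)` with its common factor `w`, `w²` or `w³` cancelled. Cancelling is
needed at `w = 0` exactly when `μ₁μ₂ = 0`. -/
def southCurve (μ₁ μ₂ w : ℂ) : ℂ⁴ :=
  if μ₁ = 0 ∧ μ₂ = 0 then !₂[1, 0, 0, 0]
  else if μ₂ = 0 then !₂[w, μ₁, 0, 0]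
  else if μ₁ = 0 then !₂[w ^ 2, 0, μ₂, 0]
  else twistorCurve μ₁ μ₂ w 1

theorem isHorizontalCurve_southCurve (μ₁ μ₂ : ℂ) : IsHorizontalCurve (southCurve μ₁ μ₂) := by
  have hdiff : Differentiable ℂ (southCurve μ₁ μ₂) := by
    rw [differentiable_euclidean]
    intro i
    unfold southCurve
    split_ifs <;> fin_cases i <;> dsimp [twistorCurve] <;> fun_prop
  refine ⟨hdiff, fun w h => ?_, fun w => ?_⟩
  · have hcoord : ∀ i, southCurve μ₁ μ₂ w i = 0 := by simp [h]
    by_cases h₁ : μ₁ = 0 <;> by_cases h₂ : μ₂ = 0 <;>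
      simp [southCurve, twistorCurve, Fin.forall_fin_succ, h₁, h₂] at hcoord
  · simp only [Horizontal, deriv_euclidean_apply (hdiff w)]
    by_cases h₁ : μ₁ = 0 <;> by_cases h₂ : μ₂ = 0 <;>
      simp [southCurve, twistorCurve, h₁, h₂]
    ring

theorem twistor_southCurve (μ₁ μ₂ : ℂ) {w : ℂ} (hw : w ≠ 0) :
    twistor (southCurve μ₁ μ₂ w) = liftCurve μ₁ μ₂ w 1 := by
  obtain ⟨c, hc, hcurve⟩ : ∃ c : ℂ, c ≠ 0 ∧ twistorCurve μ₁ μ₂ w 1 = c • southCurve μ₁ μ₂ w := by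
    by_cases h₁ : μ₁ = 0 <;> by_cases h₂ : μ₂ = 0
    · refine ⟨w ^ 3, pow_ne_zero 3 hw, ?_⟩
      ext i; fin_cases i <;> simp [southCurve, twistorCurve, h₁, h₂]
    · refine ⟨w, hw, ?_⟩
      ext i; fin_cases i <;> simp [southCurve, twistorCurve, h₁, h₂] <;> ring
    · refine ⟨w ^ 2, pow_ne_zero 2 hw, ?_⟩
      ext i; fin_cases i <;> simp [southCurve, twistorCurve, h₁, h₂] <;> ring
    · exact ⟨1, one_ne_zero, by simp [southCurve, h₁, h₂]⟩
  rw [← twistor_twistorCurve, hcurve, twistor_smul hc]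

theorem twistor_southCurve_zero (μ₁ μ₂ : ℂ) :
    twistor (southCurve μ₁ μ₂ 0) = omegaFam μ₁ μ₂ southPole := by
  by_cases h₁ : μ₁ = 0 <;> by_cases h₂ : μ₂ = 0
  · simp [southCurve, omegaFam, twistor, tau4, conj', h₁, h₂]
  · simp [southCurve, omegaFam, twistor, tau4, conj', h₁, h₂]
  · simp [southCurve, omegaFam, twistor, tau4, conj', h₁, h₂]
  · simp [southCurve, omegaFam, twistor_twistorCurve, h₁, h₂]

end Family

section Sphere

/-- The coordinate `x₁ + ix₂` of `ℝ³`. -/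
def horizontalCoord : E3 →L[ℝ] ℂ :=
  Complex.ofRealCLM ∘L EuclideanSpace.proj 0 +
    Complex.I • Complex.ofRealCLM ∘L EuclideanSpace.proj 1

/-- The coordinate `x₁ - ix₂` of `ℝ³`, used at the south pole to reverse the orientation. -/
def conjHorizontalCoord : E3 →L[ℝ] ℂ := (Complex.conjCLE : ℂ →L[ℝ] ℂ) ∘L horizontalCoord

theorem horizontalCoord_apply (x : E3) : horizontalCoord x = x 0 + x 1 * Complex.I := by
  simp [horizontalCoord, mul_comm]

theorem conjHorizontalCoord_apply (x : E3) :
    conjHorizontalCoord x = conj' (horizontalCoord x) := rfl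

theorem neg_northPole : -northPole = southPole := by
  ext i
  fin_cases i <;> simp [northPole, southPole]

theorem isStereographicFrame_northPole :
    IsStereographicFrame (EuclideanSpace.basisFun (Fin 3) ℝ) horizontalCoord northPole where
  norm_axis := by simp [northPole]
  map_axis := by simp [northPole, horizontalCoord_apply]
  sum_sq := by simp [Fin.sum_univ_three, horizontalCoord_apply]
  sum_norm_sq := by
    simp [Fin.sum_univ_three, horizontalCoord_apply]
    norm_num

theorem isStereographicFrame_southPole :
    IsStereographicFrame (EuclideanSpace.basisFun (Fin 3) ℝ) conjHorizontalCoord southPole where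
  norm_axis := by simp [southPole]
  map_axis := by simp [southPole, conjHorizontalCoord_apply, horizontalCoord_apply, conj']
  sum_sq := by simp [Fin.sum_univ_three, conjHorizontalCoord_apply, horizontalCoord_apply, conj']
  sum_norm_sq := by
    simp [Fin.sum_univ_three, conjHorizontalCoord_apply, horizontalCoord_apply, conj']
    norm_num

theorem parabolicCoord_northPole (x : E3) : parabolicCoord northPole x = ‖x‖ + x 2 := by
  simp [parabolicCoord, northPole, EuclideanSpace.inner_single_left]

theorem parabolicCoord_southPole (x : E3) : parabolicCoord southPole x = ‖x‖ - x 2 := by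
  simp [parabolicCoord, southPole, EuclideanSpace.inner_single_left, sub_eq_add_neg]

theorem parabolicCoord_northPole_eq_zero_iff {x : E3} (hx : x ∈ sphere2) :
    parabolicCoord northPole x = 0 ↔ x = southPole := by
  rw [← neg_northPole]
  exact parabolicCoord_eq_zero_iff isStereographicFrame_northPole.norm_axis
    (by simpa [sphere2] using hx)

theorem normSq_horizontalCoord (x : E3) : Complex.normSq (horizontalCoord x) =
    parabolicCoord northPole x * parabolicCoord southPole x := by
  rw [parabolicCoord_northPole, parabolicCoord_southPole, ← sq_sub_sq,
    EuclideanSpace.real_norm_sq_eq, horizontalCoord_apply, Complex.normSq_add_mul_I,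
    Fin.sum_univ_three]
  ring

theorem omegaFam_eq_liftCurve (μ₁ μ₂ : ℂ) {x : E3} (hx : x ∈ sphere2) (h : x ≠ southPole) :
    omegaFam μ₁ μ₂ x = liftCurve μ₁ μ₂ (parabolicCoord northPole x) (horizontalCoord x) := by
  have hnorm : ‖x‖ = 1 := by simpa [sphere2] using hx
  rw [omegaFam, if_neg h, parabolicCoord_northPole, hnorm, horizontalCoord_apply]

theorem isTwistorLift_northCurve (μ₁ μ₂ : ℂ) :
    IsTwistorLift horizontalCoord northPole (twistorCurve μ₁ μ₂ 1) (omegaFam μ₁ μ₂) := by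
  intro x hx hp
  have hp' : (parabolicCoord northPole x : ℂ) ≠ 0 := Complex.ofReal_ne_zero.mpr hp
  rw [omegaFam_eq_liftCurve μ₁ μ₂ hx (mt (parabolicCoord_northPole_eq_zero_iff hx).mpr hp),
    twistor_twistorCurve, ← liftCurve_mul hp' μ₁ μ₂ 1, mul_one, stereographicCoord,
    mul_div_cancel₀ _ hp']

theorem isTwistorLift_southCurve (μ₁ μ₂ : ℂ) :
    IsTwistorLift conjHorizontalCoord southPole (southCurve μ₁ μ₂) (omegaFam μ₁ μ₂) := by
  intro x hx hq
  have hq' : (parabolicCoord southPole x : ℂ) ≠ 0 := Complex.ofReal_ne_zero.mpr hq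
  by_cases h : x = southPole
  · rw [h, stereographicCoord, isStereographicFrame_southPole.map_axis, zero_div,
      twistor_southCurve_zero]
  have hp : parabolicCoord northPole x ≠ 0 := mt (parabolicCoord_northPole_eq_zero_iff hx).mp h
  have hy : horizontalCoord x ≠ 0 := by
    rw [Ne, ← Complex.normSq_eq_zero, normSq_horizontalCoord]
    exact mul_ne_zero hp hq
  have hcoord : (parabolicCoord northPole x : ℂ) =
      horizontalCoord x * stereographicCoord conjHorizontalCoord southPole x := by
    rw [stereographicCoord, conjHorizontalCoord_apply, conj', mul_div_assoc', Complex.mul_conj,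
      normSq_horizontalCoord, Complex.ofReal_mul, mul_div_cancel_right₀ _ hq']
  have hw : stereographicCoord conjHorizontalCoord southPole x ≠ 0 :=
    right_ne_zero_of_mul (hcoord ▸ Complex.ofReal_ne_zero.mpr hp)
  rw [twistor_southCurve μ₁ μ₂ hw, ← liftCurve_mul hy, ← hcoord, mul_one,
    omegaFam_eq_liftCurve μ₁ μ₂ hx h]

theorem isHarmonicSphere_omegaFam (μ₁ μ₂ : ℂ) : IsHarmonicSphere (omegaFam μ₁ μ₂) :=
  isHarmonicSphere_of_isTwistorLift isStereographicFrame_northPole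
    (neg_northPole ▸ isStereographicFrame_southPole)
    (isHorizontalCurve_northCurve μ₁ μ₂) (isHorizontalCurve_southCurve μ₁ μ₂)
    (isTwistorLift_northCurve μ₁ μ₂) (neg_northPole ▸ isTwistorLift_southCurve μ₁ μ₂)

theorem omegaFam_northPole (μ₁ μ₂ : ℂ) : omegaFam μ₁ μ₂ northPole = ((1 : ℝ), 0, 0) := by
  have hp : parabolicCoord northPole northPole ≠ 0 := by
    rw [parabolicCoord_northPole]
    simp [northPole]
  have hmem : northPole ∈ sphere2 := by simp [sphere2, northPole]
  rw [isTwistorLift_northCurve μ₁ μ₂ _ hmem hp, stereographicCoord,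
    isStereographicFrame_northPole.map_axis]
  simp [twistorCurve, twistor, tau4, conj']

theorem rot3_apply (α : ℝ) (x : E3) : rot3 α x 0 = Real.cos α * x 0 - Real.sin α * x 1 ∧
    rot3 α x 1 = Real.sin α * x 0 + Real.cos α * x 1 ∧ rot3 α x 2 = x 2 := by
  refine ⟨?_, ?_, ?_⟩ <;> simp [rot3]

theorem norm_rot3 (α : ℝ) (x : E3) : ‖rot3 α x‖ = ‖x‖ := by
  obtain ⟨h₀, h₁, h₂⟩ := rot3_apply α x
  rw [EuclideanSpace.norm_eq, EuclideanSpace.norm_eq]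
  congr 1
  simp only [Real.norm_eq_abs, sq_abs, Fin.sum_univ_three, h₀, h₁, h₂]
  linear_combination (x 0 ^ 2 + x 1 ^ 2) * Real.sin_sq_add_cos_sq α

theorem rot3_mem_sphere2 (α : ℝ) {x : E3} (hx : x ∈ sphere2) : rot3 α x ∈ sphere2 := by
  simpa [sphere2, norm_rot3] using hx

theorem horizontalCoord_rot3 (α : ℝ) (x : E3) :
    horizontalCoord (rot3 α x) = Complex.exp (Complex.I * α) * horizontalCoord x := by
  obtain ⟨h₀, h₁, -⟩ := rot3_apply α x
  rw [horizontalCoord_apply, horizontalCoord_apply, h₀, h₁, mul_comm Complex.I, Complex.exp_mul_I]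
  push_cast
  linear_combination (-Complex.sin α * x 1) * Complex.I_sq

theorem parabolicCoord_northPole_rot3 (α : ℝ) (x : E3) :
    parabolicCoord northPole (rot3 α x) = parabolicCoord northPole x := by
  rw [parabolicCoord_northPole, parabolicCoord_northPole, norm_rot3, (rot3_apply α x).2.2]

theorem liftCurve_exp_mul (μ₁ μ₂ z₀ z₁ : ℂ) (α : ℝ) :
    liftCurve μ₁ μ₂ z₀ (Complex.exp (Complex.I * α) * z₁) =
      circAct α (liftCurve μ₁ μ₂ z₀ z₁) := by
  have hnorm : Complex.normSq (Complex.exp (Complex.I * α)) = 1 := by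
    rw [Complex.normSq_eq_norm_sq, mul_comm, Complex.norm_exp_ofReal_mul_I, one_pow]
  have hexp : Complex.exp (2 * Complex.I * α) = Complex.exp (Complex.I * α) ^ 2 := by
    rw [← Complex.exp_nat_mul]
    ring_nf
  simp only [liftCurve_eq_explicitFam, explicitFam, Dfun, circAct, map_mul, hnorm, one_mul, hexp]
  refine Prod.ext rfl (Prod.ext ?_ ?_) <;> simp only <;> ring

theorem circAct_omegaFam_southPole (μ₁ μ₂ : ℂ) (α : ℝ) :
    circAct α (omegaFam μ₁ μ₂ southPole) = omegaFam μ₁ μ₂ southPole := by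
  rw [← twistor_southCurve_zero]
  by_cases h₁ : μ₁ = 0 <;> by_cases h₂ : μ₂ = 0 <;>
    simp [southCurve, twistorCurve, twistor, tau4, circAct, conj', h₁, h₂]

theorem equivariantS_omegaFam (μ₁ μ₂ : ℂ) : EquivariantS (omegaFam μ₁ μ₂) := by
  intro α x hx
  have hx' := rot3_mem_sphere2 α hx
  have hsouth : rot3 α x = southPole ↔ x = southPole := by
    rw [← parabolicCoord_northPole_eq_zero_iff hx, ← parabolicCoord_northPole_eq_zero_iff hx',
      parabolicCoord_northPole_rot3]
  by_cases h : x = southPole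
  · rw [hsouth.mpr h, h, circAct_omegaFam_southPole]
  · rw [omegaFam_eq_liftCurve μ₁ μ₂ hx' (mt hsouth.mp h), omegaFam_eq_liftCurve μ₁ μ₂ hx h,
      horizontalCoord_rot3, parabolicCoord_northPole_rot3, liftCurve_exp_mul]

end Sphere

section Fullness

theorem circAct_add (α : ℝ) (v w : V5) : circAct α (v + w) = circAct α v + circAct α w := by
  simp only [circAct, Prod.fst_add, Prod.snd_add, Prod.mk_add_mk, mul_add]

theorem circAct_smul (α c : ℝ) (v : V5) : circAct α (c • v) = c • circAct α v := by
  simp only [circAct, Prod.smul_fst, Prod.smul_snd, Prod.smul_mk, mul_smul_comm]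

theorem circAct_pi (v : V5) : circAct Real.pi v = (v.1, -v.2.1, v.2.2) := by
  rw [circAct, mul_right_comm 2, Complex.exp_two_pi_mul_I, mul_comm Complex.I,
    Complex.exp_pi_mul_I, neg_one_mul, one_mul]

theorem eq_top_of_mem_of_I_mul_mem {P : Submodule ℝ ℂ} {a : ℂ} (ha : a ≠ 0) (h : a ∈ P)
    (hI : Complex.I * a ∈ P) : P = ⊤ := by
  refine Submodule.eq_top_iff'.mpr fun u => ?_
  have hu : u = (u / a).re • a + (u / a).im • (Complex.I * a) := by
    rw [Complex.real_smul, Complex.real_smul, ← mul_assoc, ← add_mul, Complex.re_add_im,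
      div_mul_cancel₀ u ha]
  rw [hu]
  exact P.add_mem (P.smul_mem _ h) (P.smul_mem _ hI)

theorem eq_top_of_circAct_mem {W : Submodule ℝ V5} (hW : ∀ α, ∀ v ∈ W, circAct α v ∈ W)
    (haxis : ((1, 0, 0) : V5) ∈ W) {v : V5} (hv : v ∈ W) (h₁ : v.2.1 ≠ 0) (h₂ : v.2.2 ≠ 0) :
    W = ⊤ := by
  have hv₁ : ((0, v.2.1, 0) : V5) ∈ W := by
    convert W.smul_mem (1 / 2 : ℝ) (W.sub_mem hv (hW Real.pi v hv)) using 1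
    rw [circAct_pi]
    refine Prod.ext ?_ (Prod.ext ?_ ?_)
    · simp
    · simp; ring
    · simp
  have hv₂ : ((0, 0, v.2.2) : V5) ∈ W := by
    convert W.sub_mem (W.sub_mem hv hv₁) (W.smul_mem v.1 haxis) using 1
    ext <;> simp
  have hIv₁ : ((0, Complex.I * v.2.1, 0) : V5) ∈ W := by
    convert hW (Real.pi / 2) _ hv₁ using 1
    simp [circAct, mul_comm Complex.I (_ / 2), Complex.exp_pi_div_two_mul_I]
  have hIv₂ : ((0, 0, Complex.I * v.2.2) : V5) ∈ W := by
    convert hW (Real.pi / 4) _ hv₂ using 1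
    have hangle : 2 * Complex.I * (Real.pi / 4 : ℝ) = Real.pi / 2 * Complex.I := by
      push_cast
      ring
    simp [circAct, -Complex.ofReal_div, hangle, Complex.exp_pi_div_two_mul_I]
  have htop₁ : W.comap (LinearMap.inr ℝ ℝ (ℂ × ℂ) ∘ₗ LinearMap.inl ℝ ℂ ℂ) = ⊤ :=
    eq_top_of_mem_of_I_mul_mem h₁ hv₁ hIv₁
  have htop₂ : W.comap (LinearMap.inr ℝ ℝ (ℂ × ℂ) ∘ₗ LinearMap.inr ℝ ℂ ℂ) = ⊤ :=
    eq_top_of_mem_of_I_mul_mem h₂ hv₂ hIv₂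
  refine Submodule.eq_top_iff'.mpr fun ⟨t, a, b⟩ => ?_
  have ha : ((0, a, 0) : V5) ∈ W := Submodule.eq_top_iff'.mp htop₁ a
  have hb : ((0, 0, b) : V5) ∈ W := Submodule.eq_top_iff'.mp htop₂ b
  convert W.add_mem (W.add_mem (W.smul_mem t haxis) ha) hb using 1
  simp

theorem circAct_mem_span_image {ω : E3 → V5} (hω : EquivariantS ω) (α : ℝ) {v : V5}
    (hv : v ∈ Submodule.span ℝ (ω '' sphere2)) :
    circAct α v ∈ Submodule.span ℝ (ω '' sphere2) := by
  induction hv using Submodule.span_induction with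
  | mem v hv =>
    obtain ⟨x, hx, rfl⟩ := hv
    exact Submodule.subset_span ⟨rot3 α x, rot3_mem_sphere2 α hx, hω α x hx⟩
  | zero =>
    have hzero : circAct α 0 = 0 := by simpa only [zero_smul] using circAct_smul α 0 0
    rw [hzero]
    exact Submodule.zero_mem _
  | add v w _ _ hv hw => exact circAct_add α v w ▸ Submodule.add_mem _ hv hw
  | smul c v _ hv => exact circAct_smul α c v ▸ Submodule.smul_mem _ c hv

theorem one_add_normSq_pos (ζ : ℂ) : 0 < 1 + Complex.normSq ζ :=
  add_pos_of_pos_of_nonneg one_pos (Complex.normSq_nonneg ζ)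

theorem stInv_apply (ζ : ℂ) : stInv ζ 0 = 2 * ζ.re / (1 + Complex.normSq ζ) ∧
    stInv ζ 1 = 2 * ζ.im / (1 + Complex.normSq ζ) ∧
    stInv ζ 2 = (1 - Complex.normSq ζ) / (1 + Complex.normSq ζ) := by
  refine ⟨?_, ?_, ?_⟩ <;> simp [stInv]

theorem stInv_mem_sphere2 (ζ : ℂ) : stInv ζ ∈ sphere2 := by
  obtain ⟨h₀, h₁, h₂⟩ := stInv_apply ζ
  have hpos := one_add_normSq_pos ζ
  rw [sphere2, mem_sphere_zero_iff_norm, ← sq_eq_sq₀ (norm_nonneg _) zero_le_one,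
    EuclideanSpace.real_norm_sq_eq, Fin.sum_univ_three, h₀, h₁, h₂]
  field_simp
  rw [Complex.normSq_apply]
  ring

theorem omegaFam_stInv (μ₁ μ₂ ζ : ℂ) : omegaFam μ₁ μ₂ (stInv ζ) = liftCurve μ₁ μ₂ 1 ζ := by
  obtain ⟨h₀, h₁, h₂⟩ := stInv_apply ζ
  have hpos := one_add_normSq_pos ζ
  have hp : parabolicCoord northPole (stInv ζ) = 2 / (1 + Complex.normSq ζ) := by
    rw [parabolicCoord_northPole, mem_sphere_zero_iff_norm.mp (stInv_mem_sphere2 ζ), h₂]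
    field_simp
    ring
  have hp₀ : parabolicCoord northPole (stInv ζ) ≠ 0 := hp ▸ (div_pos two_pos hpos).ne'
  have hζ : stereographicCoord horizontalCoord northPole (stInv ζ) = ζ := by
    rw [stereographicCoord, hp, horizontalCoord_apply, h₀, h₁]
    have hpos' : (1 + Complex.normSq ζ : ℂ) ≠ 0 := by exact_mod_cast hpos.ne'
    push_cast
    field_simp
    exact Complex.re_add_im ζ
  rw [isTwistorLift_northCurve μ₁ μ₂ _ (stInv_mem_sphere2 ζ) hp₀, hζ, twistor_twistorCurve]

theorem Dfun_one_pos (μ₁ μ₂ ζ : ℂ) : 0 < Dfun μ₁ μ₂ 1 ζ := by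
  have h₁ := Complex.normSq_nonneg μ₁
  have h₂ := Complex.normSq_nonneg μ₂
  have h := Complex.normSq_nonneg ζ
  rw [Dfun, map_one]
  positivity

theorem omegaFam_stInv_apply_ne_zero {μ₁ μ₂ ζ : ℂ} (h₁ : μ₁ ≠ 0) (h₂ : μ₂ ≠ 0) (hζ : ζ ≠ 0)
    (h : Complex.normSq μ₂ / 3 * Complex.normSq ζ ^ 2 ≠ 1) :
    (omegaFam μ₁ μ₂ (stInv ζ)).2.1 ≠ 0 ∧ (omegaFam μ₁ μ₂ (stInv ζ)).2.2 ≠ 0 := by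
  have hD : (Dfun μ₁ μ₂ 1 ζ : ℂ) ≠ 0 := Complex.ofReal_ne_zero.mpr (Dfun_one_pos μ₁ μ₂ ζ).ne'
  have hpos : 0 < 1 + Complex.normSq μ₁ / 3 * Complex.normSq ζ := by
    have := Complex.normSq_nonneg μ₁
    have := Complex.normSq_nonneg ζ
    positivity
  rw [omegaFam_stInv, liftCurve_eq_explicitFam]
  simp only [explicitFam, conj', map_one, one_pow, mul_one]
  exact ⟨div_ne_zero (mul_ne_zero (by simp [h₁, hζ])
      (Complex.ofReal_ne_zero.mpr (sub_ne_zero.mpr h.symm))) hD,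
    div_ne_zero (mul_ne_zero (by simp [h₂, hζ]) (Complex.ofReal_ne_zero.mpr hpos.ne')) hD⟩

theorem omegaFam_zero_left (μ₂ : ℂ) (x : E3) : (omegaFam 0 μ₂ x).2.1 = 0 := by
  by_cases h : μ₂ = 0 <;> by_cases hx : x = southPole <;>
    simp [omegaFam, liftCurve, tau4, hx, h]

theorem omegaFam_zero_right (μ₁ : ℂ) (x : E3) : (omegaFam μ₁ 0 x).2.2 = 0 := by
  by_cases h : μ₁ = 0 <;> by_cases hx : x = southPole <;>
    simp [omegaFam, liftCurve, tau4, hx, h]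

theorem span_image_ne_top_of_apply_eq_zero {α : Type*} {ω : α → V5} (s : Set α)
    {f : V5 →ₗ[ℝ] ℂ} (hf : f ≠ 0) (h : ∀ x ∈ s, f (ω x) = 0) :
    Submodule.span ℝ (ω '' s) ≠ ⊤ := by
  intro htop
  refine hf (LinearMap.ker_eq_top.mp (top_le_iff.mp (htop ▸ Submodule.span_le.mpr ?_)))
  rintro _ ⟨x, hx, rfl⟩
  exact h x hx

theorem span_image_omegaFam_eq_top_iff (μ₁ μ₂ : ℂ) :
    Submodule.span ℝ (omegaFam μ₁ μ₂ '' sphere2) = ⊤ ↔ (μ₁ ≠ 0 ∧ μ₂ ≠ 0) := by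
  refine ⟨fun htop => ⟨?_, ?_⟩, fun ⟨h₁, h₂⟩ => ?_⟩
  · rintro rfl
    refine span_image_ne_top_of_apply_eq_zero sphere2
      (f := LinearMap.fst ℝ ℂ ℂ ∘ₗ LinearMap.snd ℝ ℝ (ℂ × ℂ)) (fun hf => ?_)
      (fun x _ => omegaFam_zero_left μ₂ x) htop
    simpa using LinearMap.congr_fun hf (0, 1, 0)
  · rintro rfl
    refine span_image_ne_top_of_apply_eq_zero sphere2
      (f := LinearMap.snd ℝ ℂ ℂ ∘ₗ LinearMap.snd ℝ ℝ (ℂ × ℂ)) (fun hf => ?_)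
      (fun x _ => omegaFam_zero_right μ₁ x) htop
    simpa using LinearMap.congr_fun hf (0, 0, 1)
  · obtain ⟨ζ, hζ, h⟩ : ∃ ζ : ℂ, ζ ≠ 0 ∧ Complex.normSq μ₂ / 3 * Complex.normSq ζ ^ 2 ≠ 1 := by
      by_cases h : Complex.normSq μ₂ / 3 = 1
      · exact ⟨2, two_ne_zero, by rw [h, Complex.normSq_ofNat]; norm_num⟩
      · exact ⟨1, one_ne_zero, by simpa using h⟩
    obtain ⟨hv₁, hv₂⟩ := omegaFam_stInv_apply_ne_zero h₁ h₂ hζ h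
    refine eq_top_of_circAct_mem
      (fun α v => circAct_mem_span_image (equivariantS_omegaFam μ₁ μ₂) α) ?_
      (Submodule.subset_span ⟨_, stInv_mem_sphere2 ζ, rfl⟩) hv₁ hv₂
    rw [← omegaFam_northPole μ₁ μ₂]
    exact Submodule.subset_span ⟨_, by simp [sphere2, northPole], rfl⟩

end Fullness

section ParabolicCoordinates

open Set
open scoped ENNReal

theorem lintegral_eq_mul_lintegral_comp_smul {E : Type*} [NormedAddCommGroup E] [NormedSpace ℝ E]
    [MeasurableSpace E] [BorelSpace E] [FiniteDimensional ℝ E] (μ : Measure E)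
    [μ.IsAddHaarMeasure] {r : ℝ} (hr : r ≠ 0) (f : E → ℝ≥0∞) :
    ∫⁻ x, f x ∂μ = ENNReal.ofReal |r ^ Module.finrank ℝ E| * ∫⁻ x, f (r • x) ∂μ := by
  have hmap : ∫⁻ x, f (r • x) ∂μ = ∫⁻ x, f x ∂(Measure.map (r • ·) μ) :=
    (lintegral_map_equiv f (Homeomorph.smulOfNeZero r hr).toMeasurableEquiv).symm
  rw [hmap, Measure.map_addHaar_smul μ hr, lintegral_smul_measure, smul_eq_mul, ← mul_assoc,
    ← ENNReal.ofReal_mul (abs_nonneg _), ← abs_mul, mul_inv_cancel₀ (pow_ne_zero _ hr), abs_one,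
    ENNReal.ofReal_one, one_mul]

theorem lintegral_comp_div {p : ℝ} (hp : p ≠ 0) (f : ℂ → ℝ≥0∞) :
    ∫⁻ y : ℂ, ENNReal.ofReal ((1 + Complex.normSq y / p ^ 2) / 2) * f (y / p) =
      ∫⁻ ζ, ENNReal.ofReal (p ^ 2 * (1 + Complex.normSq ζ) / 2) * f ζ := by
  rw [lintegral_eq_mul_lintegral_comp_smul volume hp, Complex.finrank_real_complex,
    abs_of_nonneg (sq_nonneg p), ← lintegral_const_mul' _ _ ENNReal.ofReal_ne_top]
  refine lintegral_congr fun ζ => ?_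
  rw [← mul_assoc, ← ENNReal.ofReal_mul (sq_nonneg p), Complex.real_smul,
    mul_div_cancel_left₀ ζ (Complex.ofReal_ne_zero.mpr hp), map_mul, Complex.normSq_ofReal, ← sq,
    mul_div_cancel_left₀ _ (pow_ne_zero 2 hp), mul_div_assoc]

theorem lintegral_comp_sqrt_add {c : ℝ} (hc : 0 < c) (g : ℝ → ℝ≥0∞) :
    ∫⁻ t, g (√(t ^ 2 + c) + t) =
      ∫⁻ p in Ioi 0, ENNReal.ofReal ((1 + c / p ^ 2) / 2) * g p := by
  let h (p : ℝ) : ℝ := (p - c / p) / 2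
  have hderiv (p : ℝ) (hp : p ∈ Ioi 0) :
      HasDerivWithinAt h ((1 + c / p ^ 2) / 2) (Ioi 0) p := by
    have hinv := (hasDerivAt_inv (ne_of_gt hp)).const_mul c
    refine ((((hasDerivAt_id p).sub hinv).div_const 2).congr_deriv ?_).hasDerivWithinAt
    ring
  have hleft (p : ℝ) (hp : p ∈ Ioi 0) : √(h p ^ 2 + c) + h p = p := by
    have hp' : 0 < p := hp
    have hsq : h p ^ 2 + c = ((p + c / p) / 2) ^ 2 := by
      simp only [h]
      field_simp
      ring
    rw [hsq, Real.sqrt_sq (by positivity)]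
    ring
  have hpos (t : ℝ) : 0 < √(t ^ 2 + c) + t := by
    have : √(t ^ 2) < √(t ^ 2 + c) := Real.sqrt_lt_sqrt (sq_nonneg t) (by linarith)
    rw [Real.sqrt_sq_eq_abs] at this
    linarith [neg_abs_le t]
  have hright (t : ℝ) : h (√(t ^ 2 + c) + t) = t := by
    have hsq : √(t ^ 2 + c) ^ 2 = t ^ 2 + c := Real.sq_sqrt (by positivity)
    have := (hpos t).ne'
    simp only [h]
    field_simp
    linear_combination hsq
  have himage : h '' Ioi 0 = univ := eq_univ_of_forall fun t => ⟨_, hpos t, hright t⟩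
  have hinj : InjOn h (Ioi 0) := LeftInvOn.injOn (f₁' := fun t => √(t ^ 2 + c) + t) hleft
  rw [← setLIntegral_univ, ← himage,
    lintegral_image_eq_lintegral_abs_deriv_mul measurableSet_Ioi hderiv hinj]
  refine setLIntegral_congr_fun measurableSet_Ioi fun p hp => ?_
  simp only [hleft p hp]
  rw [abs_of_nonneg (by positivity)]

theorem measurePreserving_axis_horizontalCoord :
    MeasurePreserving (fun x : E3 => (x 2, horizontalCoord x)) := by
  have hpi := (volume_preserving_piFinSuccAbove (fun _ : Fin 3 => ℝ) 2).comp
    (EuclideanSpace.volume_preserving_symm_measurableEquiv_toLp (Fin 3))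
  have hcomplex := (MeasurePreserving.id (volume : Measure ℝ)).prod
    (Complex.volume_preserving_equiv_pi.symm Complex.measurableEquivPi)
  convert hcomplex.comp hpi using 1
  · ext x : 1
    rw [horizontalCoord_apply]
    rfl
  · rfl

theorem parabolicCoord_northPole_eq_sqrt (x : E3) :
    parabolicCoord northPole x = √(x 2 ^ 2 + Complex.normSq (horizontalCoord x)) + x 2 := by
  rw [parabolicCoord_northPole, horizontalCoord_apply, Complex.normSq_add_mul_I,
    EuclideanSpace.norm_eq]
  simp only [Real.norm_eq_abs, sq_abs, Fin.sum_univ_three]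
  congr 2
  ring

theorem ae_horizontalCoord_ne_zero : ∀ᵐ x : E3, horizontalCoord x ≠ 0 := by
  have hsnd : MeasurePreserving (fun x : E3 => (x 2, horizontalCoord x)) :=
    measurePreserving_axis_horizontalCoord
  have hae : ∀ᵐ v : ℝ × ℂ, v.2 ≠ 0 :=
    Measure.quasiMeasurePreserving_snd.ae (compl_mem_ae_iff.mpr (measure_singleton 0))
  exact hsnd.quasiMeasurePreserving.ae hae

theorem ae_parabolicCoord_northPole_ne_zero : ∀ᵐ x : E3, parabolicCoord northPole x ≠ 0 := by
  filter_upwards [ae_horizontalCoord_ne_zero] with x hx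
  rw [Ne, ← Complex.normSq_eq_zero, normSq_horizontalCoord] at hx
  exact left_ne_zero_of_mul hx

theorem lintegral_parabolicCoord_stereographicCoord {G : ℝ × ℂ → ℝ≥0∞} (hG : Measurable G) :
    ∫⁻ x, G (parabolicCoord northPole x, stereographicCoord horizontalCoord northPole x) =
      ∫⁻ ζ, ∫⁻ p in Ioi 0,
        ENNReal.ofReal (p ^ 2 * (1 + Complex.normSq ζ) / 2) * G (p, ζ) := by
  have hmeas : Measurable fun v : ℝ × ℂ =>
      G (√(v.1 ^ 2 + Complex.normSq v.2) + v.1,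
        v.2 / ((√(v.1 ^ 2 + Complex.normSq v.2) + v.1 : ℝ) : ℂ)) := by fun_prop
  calc ∫⁻ x, G (parabolicCoord northPole x, stereographicCoord horizontalCoord northPole x)
    _ = ∫⁻ v : ℝ × ℂ, G (√(v.1 ^ 2 + Complex.normSq v.2) + v.1,
        v.2 / ((√(v.1 ^ 2 + Complex.normSq v.2) + v.1 : ℝ) : ℂ)) := by
      rw [← measurePreserving_axis_horizontalCoord.lintegral_comp hmeas]
      simp only [stereographicCoord, parabolicCoord_northPole_eq_sqrt]
    _ = ∫⁻ y : ℂ, ∫⁻ t : ℝ, G (√(t ^ 2 + Complex.normSq y) + t,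
        y / ((√(t ^ 2 + Complex.normSq y) + t : ℝ) : ℂ)) :=
      lintegral_prod_symm _ hmeas.aemeasurable
    _ = ∫⁻ y : ℂ, ∫⁻ p in Ioi 0,
        ENNReal.ofReal ((1 + Complex.normSq y / p ^ 2) / 2) * G (p, y / p) := by
      refine lintegral_congr_ae ?_
      filter_upwards [compl_mem_ae_iff.mpr (measure_singleton (0 : ℂ))] with y hy
      exact lintegral_comp_sqrt_add (Complex.normSq_pos.mpr hy) fun p => G (p, y / p)
    _ = ∫⁻ p in Ioi 0, ∫⁻ y : ℂ,
        ENNReal.ofReal ((1 + Complex.normSq y / p ^ 2) / 2) * G (p, y / p) :=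
      lintegral_lintegral_swap (by fun_prop)
    _ = ∫⁻ p in Ioi 0, ∫⁻ ζ, ENNReal.ofReal (p ^ 2 * (1 + Complex.normSq ζ) / 2) * G (p, ζ) :=
      setLIntegral_congr_fun measurableSet_Ioi fun p hp =>
        lintegral_comp_div (ne_of_gt hp) fun ζ => G (p, ζ)
    _ = _ := lintegral_lintegral_swap (by fun_prop)

end ParabolicCoordinates

section Energy

open Set Filter Topology
open scoped ENNReal

theorem norm_eq_parabolicCoord_mul {x : E3} (hx : parabolicCoord northPole x ≠ 0) :
    ‖x‖ = parabolicCoord northPole x *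
      (1 + Complex.normSq (stereographicCoord horizontalCoord northPole x)) / 2 := by
  rw [stereographicCoord, map_div₀, normSq_horizontalCoord, Complex.normSq_ofReal,
    mul_div_mul_left _ _ hx, mul_add, mul_div_cancel₀ _ hx, parabolicCoord_northPole,
    parabolicCoord_southPole]
  ring

theorem lintegral_Ioi_mul_indicator_Iio_div {c : ℝ} (hc : 0 < c) (a : ℝ≥0∞) :
    ∫⁻ p in Ioi 0, ENNReal.ofReal (p ^ 2 * c / 2) *
      (Iio (2 / c)).indicator (fun p => a / ENNReal.ofReal (p ^ 2)) p = a := by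
  have hcongr (p : ℝ) (hp : p ∈ Ioi 0) : ENNReal.ofReal (p ^ 2 * c / 2) *
      (Iio (2 / c)).indicator (fun p => a / ENNReal.ofReal (p ^ 2)) p =
        (Iio (2 / c)).indicator (fun _ => ENNReal.ofReal (c / 2) * a) p := by
    have hp₀ : ENNReal.ofReal (p ^ 2) ≠ 0 := (ENNReal.ofReal_pos.mpr (pow_pos hp 2)).ne'
    by_cases h : p ∈ Iio (2 / c)
    · rw [indicator_of_mem h, indicator_of_mem h, mul_div_assoc, mul_comm (p ^ 2),
        ENNReal.ofReal_mul (by positivity), mul_assoc,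
        ENNReal.mul_div_cancel hp₀ ENNReal.ofReal_ne_top]
    · rw [indicator_of_notMem h, indicator_of_notMem h, mul_zero]
  rw [setLIntegral_congr_fun measurableSet_Ioi hcongr, lintegral_indicator measurableSet_Iio,
    Measure.restrict_restrict measurableSet_Iio, inter_comm, Ioi_inter_Iio, setLIntegral_const,
    Real.volume_Ioo, sub_zero, mul_right_comm, ← ENNReal.ofReal_mul (by positivity),
    div_mul_div_cancel₀ two_ne_zero, div_self hc.ne', ENNReal.ofReal_one, one_mul]

theorem setLIntegral_ball_stereographicCoord {f : ℂ → ℝ≥0∞} (hf : Measurable f) :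
    ∫⁻ x in Metric.ball (0 : E3) 1, f (stereographicCoord horizontalCoord northPole x) /
      ENNReal.ofReal (parabolicCoord northPole x ^ 2) = ∫⁻ ζ, f ζ := by
  let S : Set (ℝ × ℂ) := {v | v.1 < 2 / (1 + Complex.normSq v.2)}
  have hS : MeasurableSet S := measurableSet_lt (by fun_prop) (by fun_prop)
  let G : ℝ × ℂ → ℝ≥0∞ := S.indicator fun v => f v.2 / ENNReal.ofReal (v.1 ^ 2)
  have hG : Measurable G := Measurable.indicator (by fun_prop) hS
  calc ∫⁻ x in Metric.ball (0 : E3) 1, f (stereographicCoord horizontalCoord northPole x) /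
        ENNReal.ofReal (parabolicCoord northPole x ^ 2)
    _ = ∫⁻ x, G (parabolicCoord northPole x, stereographicCoord horizontalCoord northPole x) := by
      rw [← lintegral_indicator measurableSet_ball]
      refine lintegral_congr_ae ?_
      filter_upwards [ae_parabolicCoord_northPole_ne_zero] with x hx
      simp only [indicator, G, S, mem_ofPred_eq, mem_ball_zero_iff, norm_eq_parabolicCoord_mul hx,
        lt_div_iff₀ (one_add_normSq_pos _), div_lt_one (two_pos (α := ℝ))]
    _ = ∫⁻ ζ, f ζ := by
      rw [lintegral_parabolicCoord_stereographicCoord hG]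
      exact lintegral_congr fun ζ =>
        lintegral_Ioi_mul_indicator_Iio_div (one_add_normSq_pos ζ) (f ζ)

theorem setIntegral_ball_stereographicCoord {f : ℂ → ℝ} (hf : Measurable f) (hf₀ : ∀ ζ, 0 ≤ f ζ) :
    ∫ x in Metric.ball (0 : E3) 1, f (stereographicCoord horizontalCoord northPole x) /
      parabolicCoord northPole x ^ 2 = ∫ ζ, f ζ := by
  have hp : Measurable (parabolicCoord northPole) := by
    simp only [funext parabolicCoord_northPole]
    fun_prop
  have hζ : Measurable (stereographicCoord horizontalCoord northPole) :=
    horizontalCoord.measurable.div (Complex.measurable_ofReal.comp hp)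
  have hmeas : Measurable fun x => f (stereographicCoord horizontalCoord northPole x) /
      parabolicCoord northPole x ^ 2 := (hf.comp hζ).div (hp.pow_const 2)
  rw [integral_eq_lintegral_of_nonneg_ae (.of_forall fun x => div_nonneg (hf₀ _) (sq_nonneg _))
      hmeas.aestronglyMeasurable,
    integral_eq_lintegral_of_nonneg_ae (.of_forall hf₀) hf.aestronglyMeasurable,
    ← setLIntegral_ball_stereographicCoord hf.ennreal_ofReal]
  congr 1
  refine lintegral_congr_ae (ae_restrict_of_ae ?_)
  filter_upwards [ae_parabolicCoord_northPole_ne_zero] with x hx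
  exact ENNReal.ofReal_div_of_pos (by positivity)

theorem integral_comp_normSq {a a' : ℝ → ℝ} {L : ℝ} (ha : ∀ s, 0 ≤ s → HasDerivAt a (a' s) s)
    (ha' : ∀ s, 0 ≤ s → 0 ≤ a' s) (hL : Tendsto a atTop (𝓝 L)) :
    ∫ ζ : ℂ, a' (Complex.normSq ζ) = Real.pi * (L - a 0) := by
  have hderiv (ρ : ℝ) : HasDerivAt (fun ρ => a (ρ ^ 2) / 2) (ρ * a' (ρ ^ 2)) ρ := by
    refine (((ha _ (sq_nonneg ρ)).comp (h := fun ρ : ℝ => ρ ^ 2) ρ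
      (hasDerivAt_pow 2 ρ)).div_const 2).congr_deriv ?_
    push_cast
    ring
  have hlim : Tendsto (fun ρ : ℝ => a (ρ ^ 2) / 2) atTop (𝓝 (L / 2)) :=
    (hL.comp (tendsto_pow_atTop two_ne_zero)).div_const 2
  have hradial : ∫ ρ in Ioi 0, ρ * a' (ρ ^ 2) = L / 2 - a (0 ^ 2) / 2 :=
    integral_Ioi_of_hasDerivAt_of_nonneg' (fun ρ _ => hderiv ρ)
      (fun ρ hρ => mul_nonneg (le_of_lt hρ) (ha' _ (sq_nonneg ρ))) hlim
  have hvol : (volume : Measure ℂ).real (Metric.ball 0 1) = Real.pi := by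
    simp [Measure.real]
  simp only [Complex.normSq_eq_norm_sq]
  rw [integral_fun_norm_addHaar volume fun ρ => a' (ρ ^ 2), Complex.finrank_real_complex, hvol]
  simp only [pow_one, smul_eq_mul, nsmul_eq_mul, Nat.reduceSub, Nat.cast_ofNat, hradial,
    zero_pow two_ne_zero]
  ring

/-- For `A = |μ₁|²` and `B = |μ₂|²`, the Fubini–Study area (divided by `π`) which the curve
`ζ ↦ Ψ(1, ζ)` sweeps out over the disc `|ζ|² ≤ s`. -/
def sweptArea (A B s : ℝ) : ℝ :=
  s * (A + 2 * B * s + A * B / 3 * s ^ 2) / (1 + A * s + B * s ^ 2 + A * B / 9 * s ^ 3)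

/-- The derivative of `sweptArea A B`. -/
def areaDensity (A B s : ℝ) : ℝ :=
  (A + 4 * B * s + 2 * A * B * s ^ 2 + 4 / 9 * A ^ 2 * B * s ^ 3 + A * B ^ 2 / 9 * s ^ 4) /
    (1 + A * s + B * s ^ 2 + A * B / 9 * s ^ 3) ^ 2

theorem areaDensity_nonneg {A B s : ℝ} (hA : 0 ≤ A) (hB : 0 ≤ B) (hs : 0 ≤ s) :
    0 ≤ areaDensity A B s := by
  rw [areaDensity]
  positivity

theorem hasDerivAt_sweptArea {A B s : ℝ} (hA : 0 ≤ A) (hB : 0 ≤ B) (hs : 0 ≤ s) :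
    HasDerivAt (sweptArea A B) (areaDensity A B s) s := by
  have hden : 1 + A * s + B * s ^ 2 + A * B / 9 * s ^ 3 ≠ 0 := by positivity
  have hnum := (hasDerivAt_id s).mul ((((hasDerivAt_id s).const_mul (2 * B)).const_add A).add
    ((hasDerivAt_pow 2 s).const_mul (A * B / 3)))
  have hd := ((((hasDerivAt_id s).const_mul A).const_add 1).add
    ((hasDerivAt_pow 2 s).const_mul B)).add ((hasDerivAt_pow 3 s).const_mul (A * B / 9))
  refine (hnum.div hd hden).congr_deriv ?_
  rw [areaDensity]
  congr 1
  simp only [id_eq, Pi.add_apply, one_mul, mul_one, Nat.cast_ofNat, Nat.add_one_sub_one, pow_one,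
    Pi.mul_apply]
  ring

theorem tendsto_sweptArea_atTop {A B : ℝ} (hA : A ≠ 0) (hB : B ≠ 0) :
    Tendsto (sweptArea A B) atTop (𝓝 3) := by
  have hcont : ContinuousAt (fun r => (A * r ^ 2 + 2 * B * r + A * B / 3) /
      (r ^ 3 + A * r ^ 2 + B * r + A * B / 9)) 0 :=
    ContinuousAt.div (by fun_prop) (by fun_prop) (by simp [hA, hB])
  have hvalue : (A * 0 ^ 2 + 2 * B * 0 + A * B / 3) /
      (0 ^ 3 + A * 0 ^ 2 + B * 0 + A * B / 9) = 3 := by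
    field_simp
    ring
  refine (hvalue ▸ hcont.tendsto.comp tendsto_inv_atTop_zero).congr' ?_
  filter_upwards [eventually_gt_atTop 0] with s hs
  simp only [Function.comp_apply, sweptArea]
  rw [← mul_div_mul_left _ _ (pow_ne_zero 3 hs.ne')]
  congr 1 <;> field_simp

theorem norm_sq_northCurve (μ₁ μ₂ ζ : ℂ) : ‖twistorCurve μ₁ μ₂ 1 ζ‖ ^ 2 =
    1 + Complex.normSq μ₁ * Complex.normSq ζ + Complex.normSq μ₂ * Complex.normSq ζ ^ 2 +
      Complex.normSq μ₁ * Complex.normSq μ₂ / 9 * Complex.normSq ζ ^ 3 := by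
  simp only [twistorCurve, one_pow, mul_one, neg_mul, EuclideanSpace.norm_sq_eq,
    Fin.sum_univ_four, Fin.isValue, Matrix.cons_val_zero, norm_one, Matrix.cons_val_one,
    Complex.norm_mul, Matrix.cons_val, norm_pow, norm_neg, Complex.norm_div, Complex.norm_ofNat,
    Complex.normSq_eq_norm_sq]
  ring

theorem norm_sq_deriv_northCurve (μ₁ μ₂ ζ : ℂ) : ‖deriv (twistorCurve μ₁ μ₂ 1) ζ‖ ^ 2 =
    Complex.normSq μ₁ + 4 * Complex.normSq μ₂ * Complex.normSq ζ +
      Complex.normSq μ₁ * Complex.normSq μ₂ * Complex.normSq ζ ^ 2 := by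
  simp only [deriv_northCurve, neg_mul, EuclideanSpace.norm_sq_eq, Fin.sum_univ_four, Fin.isValue,
    Matrix.cons_val_zero, norm_zero, ne_eq, OfNat.ofNat_ne_zero, not_false_eq_true, zero_pow,
    Matrix.cons_val_one, zero_add, Matrix.cons_val, Complex.norm_mul, Complex.norm_ofNat,
    norm_neg, norm_pow, Complex.normSq_eq_norm_sq]
  ring

theorem inner_northCurve_deriv (μ₁ μ₂ ζ : ℂ) :
    inner ℂ (twistorCurve μ₁ μ₂ 1 ζ) (deriv (twistorCurve μ₁ μ₂ 1) ζ) =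
      conj' ζ * ((Complex.normSq μ₁ + 2 * Complex.normSq μ₂ * Complex.normSq ζ +
        Complex.normSq μ₁ * Complex.normSq μ₂ / 3 * Complex.normSq ζ ^ 2 : ℝ) : ℂ) := by
  push_cast
  simp only [Complex.normSq_eq_conj_mul_self]
  simp only [twistorCurve, one_pow, mul_one, neg_mul, deriv_northCurve, PiLp.inner_apply,
    RCLike.inner_apply, Fin.sum_univ_four, Fin.isValue, Matrix.cons_val_zero, map_one,
    Matrix.cons_val_one, map_mul, zero_add, Matrix.cons_val, map_pow, map_neg, map_div₀,
    Complex.conj_ofNat, mul_neg, neg_neg, conj']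
  ring

theorem fubiniStudy_northCurve (μ₁ μ₂ ζ : ℂ) :
    fubiniStudy (twistorCurve μ₁ μ₂ 1 ζ) (deriv (twistorCurve μ₁ μ₂ 1) ζ) =
      areaDensity (Complex.normSq μ₁) (Complex.normSq μ₂) (Complex.normSq ζ) := by
  have hpow : ‖twistorCurve μ₁ μ₂ 1 ζ‖ ^ 4 = (‖twistorCurve μ₁ μ₂ 1 ζ‖ ^ 2) ^ 2 := by ring
  rw [fubiniStudy, areaDensity, hpow, norm_sq_northCurve, norm_sq_deriv_northCurve,
    inner_northCurve_deriv, ← Complex.normSq_eq_norm_sq, map_mul, Complex.normSq_ofReal, conj',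
    Complex.normSq_conj]
  congr 1
  ring

theorem integral_gradSq_homExt_omegaFam {μ₁ μ₂ : ℂ} (hμ : μ₁ * μ₂ ≠ 0) :
    ∫ x in Metric.ball (0 : E3) 1, gradSq (homExt (omegaFam μ₁ μ₂)) x = 24 * Real.pi := by
  have hA := Complex.normSq_nonneg μ₁
  have hB := Complex.normSq_nonneg μ₂
  let density (ζ : ℂ) : ℝ :=
    areaDensity (Complex.normSq μ₁) (Complex.normSq μ₂) (Complex.normSq ζ)
  have hdensity : Measurable density := by
    simp only [density, areaDensity]
    fun_prop
  calc ∫ x in Metric.ball (0 : E3) 1, gradSq (homExt (omegaFam μ₁ μ₂)) x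
    _ = ∫ x in Metric.ball (0 : E3) 1,
        8 * (density (stereographicCoord horizontalCoord northPole x) /
          parabolicCoord northPole x ^ 2) := by
      refine integral_congr_ae (ae_restrict_of_ae ?_)
      filter_upwards [ae_parabolicCoord_northPole_ne_zero] with x hx
      rw [(isTwistorLift_northCurve μ₁ μ₂).gradSq_homExt (isHorizontalCurve_northCurve μ₁ μ₂)
        isStereographicFrame_northPole hx, fubiniStudy_northCurve, mul_div_assoc]
    _ = 8 * ∫ ζ, density ζ := by
      rw [integral_const_mul, setIntegral_ball_stereographicCoord hdensity fun ζ =>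
        areaDensity_nonneg hA hB (Complex.normSq_nonneg ζ)]
    _ = 8 * (Real.pi * (3 - sweptArea (Complex.normSq μ₁) (Complex.normSq μ₂) 0)) := by
      rw [integral_comp_normSq (fun s => hasDerivAt_sweptArea hA hB)
        (fun s => areaDensity_nonneg hA hB) (tendsto_sweptArea_atTop
          (Complex.normSq_eq_zero.not.mpr (left_ne_zero_of_mul hμ))
          (Complex.normSq_eq_zero.not.mpr (right_ne_zero_of_mul hμ)))]
    _ = 24 * Real.pi := by
      rw [sweptArea]
      ring

end Energy

/-- The composition of the twistor fibration with the horizontal curve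
(z₀³, μ₁z₀²z₁, μ₂z₀z₁², −μ₁μ₂z₁³/3) is given by the explicit formula; the resulting
map ω_{μ₁,μ₂} : S² → S⁴ is a smooth S¹-equivariant harmonic sphere sending the north
pole to (1,0,0); it is linearly full iff μ₁ ≠ 0 and μ₂ ≠ 0, in which case
∫_{B₁} |∇ŵ|² dx = 24π. -/
theorem statement8 (μ1 μ2 : ℂ) :
    (∀ z0 z1 : ℂ, ¬(z0 = 0 ∧ z1 = 0) → liftCurve μ1 μ2 z0 z1 = explicitFam μ1 μ2 z0 z1) ∧
    IsHarmonicSphere (omegaFam μ1 μ2) ∧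
    EquivariantS (omegaFam μ1 μ2) ∧
    omegaFam μ1 μ2 northPole = ((1 : ℝ), 0, 0) ∧
    (Submodule.span ℝ (omegaFam μ1 μ2 '' sphere2) = ⊤ ↔ (μ1 ≠ 0 ∧ μ2 ≠ 0)) ∧
    (μ1 * μ2 ≠ 0 →
      ∫ x in Metric.ball (0 : E3) 1, gradSq (homExt (omegaFam μ1 μ2)) x = 24 * Real.pi) :=
  ⟨fun z0 z1 _ => liftCurve_eq_explicitFam μ1 μ2 z0 z1,
    isHarmonicSphere_omegaFam μ1 μ2,
    equivariantS_omegaFam μ1 μ2,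
    omegaFam_northPole μ1 μ2,
    span_image_omegaFam_eq_top_iff μ1 μ2,
    integral_gradSq_homExt_omegaFam⟩
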